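/- arXiv:2410.23993 — 4 statements merged into one kernel-verified Lean document; each statement's English description precedes it below -/
import Mathlib

section
/- Let d ∈ ℕ, N > 0 and q ≥ 1, and set N₁ = N + d^{1/q}/2. Then (2⌊κ_q(d,N)⌋ + 1)^d ≤ |B_N^q ∩ ℤ^d| ≤ |B_{N₁}^q|, where |B_{N₁}^q| denotes the Lebesgue measure of the ball B_{N₁}^q in ℝ^d. -/
open scoped ENNReal
open Classical in
noncomputable def latticeBall (q : ℝ) (d : ℕ) (t : ℝ) : Finset (Fin d → ℤ) :=
  (Finset.Icc (fun _ => -(⌈t⌉₊ : ℤ)) (fun _ => (⌈t⌉₊ : ℤ))).filter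
    (fun x => ∑ i, |(x i : ℝ)| ^ q ≤ t ^ q)

/-!
In `d` dimensions, a cube of half-side `r` centred at the origin lies in the `ℓ^q` ball of radius
`d ^ (1 / q) * r`. With `r = ⌊N / d ^ (1 / q)⌋` this places a cube containing `(2 * r + 1) ^ d`
lattice points inside the ball of radius `N`. With `r = 1 / 2` and Minkowski's inequality it shows
that the disjoint unit cubes centred at the lattice points of the ball of radius `N` lie in the ball
of radius `N + d ^ (1 / q) / 2`. Cubes are the balls of the sup norm, which is the norm that
`ι → ℝ` carries.
-/

section LqBall

variable {ι : Type*} [Fintype ι] {q r s t : ℝ} {x y : ι → ℝ}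

/-- The closed ball of radius `t` about the origin for the `ℓ^q` norm on `ι → ℝ`, written without
the `q`-th root so that it matches the defining condition of `latticeBall`. -/
def lqBall (ι : Type*) [Fintype ι] (q t : ℝ) : Set (ι → ℝ) :=
  {x | ∑ i, |x i| ^ q ≤ t ^ q}

theorem mem_lqBall_iff_rpow_le (hq : 0 < q) (ht : 0 ≤ t) :
    x ∈ lqBall ι q t ↔ (∑ i, |x i| ^ q) ^ (1 / q) ≤ t := by
  rw [one_div, Real.rpow_inv_le_iff_of_pos (by positivity) ht hq]
  rfl

theorem lqBall_subset_lqBall (hq : 0 ≤ q) (hs : 0 ≤ s) (hst : s ≤ t) :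
    lqBall ι q s ⊆ lqBall ι q t :=
  fun _ hx => hx.trans (Real.rpow_le_rpow hs hst hq)

theorem add_mem_lqBall (hq : 1 ≤ q) (hs : 0 ≤ s) (ht : 0 ≤ t)
    (hx : x ∈ lqBall ι q s) (hy : y ∈ lqBall ι q t) : x + y ∈ lqBall ι q (s + t) := by
  have hq₀ : 0 < q := by linarith
  rw [mem_lqBall_iff_rpow_le hq₀ hs] at hx
  rw [mem_lqBall_iff_rpow_le hq₀ ht] at hy
  rw [mem_lqBall_iff_rpow_le hq₀ (add_nonneg hs ht)]
  exact (Real.Lp_add_le Finset.univ x y hq).trans (add_le_add hx hy)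

theorem abs_le_of_mem_lqBall (hq : 0 < q) (ht : 0 ≤ t) (hx : x ∈ lqBall ι q t) (i : ι) :
    |x i| ≤ t := by
  rw [← Real.rpow_le_rpow_iff (abs_nonneg _) ht hq]
  calc |x i| ^ q ≤ ∑ j, |x j| ^ q :=
        Finset.single_le_sum (f := fun j => |x j| ^ q) (fun _ _ => by positivity)
          (Finset.mem_univ i)
    _ ≤ t ^ q := hx

theorem mem_lqBall_of_norm_le (hq : 0 < q) (hx : ‖x‖ ≤ r) :
    x ∈ lqBall ι q ((Fintype.card ι : ℝ) ^ (1 / q) * r) := by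
  have hr : 0 ≤ r := (norm_nonneg x).trans hx
  have hcoord (i : ι) : |x i| ≤ r := (norm_le_pi_norm x i).trans hx
  calc ∑ i, |x i| ^ q ≤ ∑ _i : ι, r ^ q :=
        Finset.sum_le_sum fun i _ => Real.rpow_le_rpow (abs_nonneg _) (hcoord i) hq.le
    _ = Fintype.card ι * r ^ q := by simp
    _ = ((Fintype.card ι : ℝ) ^ (1 / q) * r) ^ q := by
        rw [Real.mul_rpow (by positivity) hr, one_div, Real.rpow_inv_rpow (by positivity) hq.ne']

theorem ball_subset_lqBall_add (hq : 1 ≤ q) (ht : 0 ≤ t) (hx : x ∈ lqBall ι q t) :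
    Metric.ball x r ⊆ lqBall ι q (t + (Fintype.card ι : ℝ) ^ (1 / q) * r) := by
  intro z hz
  have hr : 0 < r := Metric.pos_of_mem_ball hz
  have hdiff : z - x ∈ lqBall ι q ((Fintype.card ι : ℝ) ^ (1 / q) * r) :=
    mem_lqBall_of_norm_le (by linarith) (mem_ball_iff_norm.mp hz).le
  simpa only [add_sub_cancel] using add_mem_lqBall hq ht (by positivity) hx hdiff

end LqBall

section IntegerPoints

variable {ι : Type*} [Fintype ι]

theorem card_Icc_neg_natCast_pi [DecidableEq ι] (k : ℕ) :
    (Finset.Icc (fun _ : ι => -(k : ℤ)) fun _ => (k : ℤ)).card = (2 * k + 1) ^ Fintype.card ι := by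
  have hside : ((k : ℤ) + 1 - -k).toNat = 2 * k + 1 := by omega
  simp only [Pi.card_Icc, Int.card_Icc, hside, Finset.prod_const, Finset.card_univ]

theorem one_le_dist_intCast_pi {x y : ι → ℤ} (hxy : x ≠ y) :
    1 ≤ dist (fun i => (x i : ℝ)) (fun i => (y i : ℝ)) := by
  obtain ⟨i, hi⟩ := Function.ne_iff.mp hxy
  calc (1 : ℝ) ≤ dist (x i) (y i) := Int.pairwise_one_le_dist hi
    _ = dist (x i : ℝ) (y i : ℝ) := (Int.dist_cast_real _ _).symm
    _ ≤ dist (fun i => (x i : ℝ)) (fun i => (y i : ℝ)) :=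
        dist_le_pi_dist (fun i => (x i : ℝ)) (fun i => (y i : ℝ)) i

theorem card_le_volume_of_ball_subset {s : Finset (ι → ℤ)} {A : Set (ι → ℝ)}
    (hA : ∀ x ∈ s, Metric.ball (fun i => (x i : ℝ)) (1 / 2) ⊆ A) :
    (s.card : ℝ≥0∞) ≤ MeasureTheory.volume A := by
  let cube (x : ι → ℤ) : Set (ι → ℝ) := Metric.ball (fun i => (x i : ℝ)) (1 / 2)
  have hvolume (x : ι → ℤ) : MeasureTheory.volume (cube x) = 1 := by
    rw [Real.volume_pi_ball _ (by norm_num)]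
    norm_num
  have hdisjoint : (s : Set (ι → ℤ)).PairwiseDisjoint cube := fun x _ y _ hxy =>
    Metric.ball_disjoint_ball (by linarith [one_le_dist_intCast_pi hxy])
  calc (s.card : ℝ≥0∞) = ∑ x ∈ s, MeasureTheory.volume (cube x) := by simp [hvolume]
    _ = MeasureTheory.volume (⋃ x ∈ s, cube x) :=
        (MeasureTheory.measure_biUnion_finset hdisjoint fun _ _ => measurableSet_ball).symm
    _ ≤ MeasureTheory.volume A := MeasureTheory.measure_mono (Set.iUnion₂_subset hA)

end IntegerPoints

section LatticeBall

variable {q t : ℝ} {d : ℕ}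

theorem mem_latticeBall_iff (hq : 0 < q) (ht : 0 ≤ t) {x : Fin d → ℤ} :
    x ∈ latticeBall q d t ↔ (fun i => (x i : ℝ)) ∈ lqBall (Fin d) q t := by
  refine ⟨fun hx => (Finset.mem_filter.mp hx).2, fun hx => Finset.mem_filter.mpr ⟨?_, hx⟩⟩
  have habs (i : Fin d) : |x i| ≤ (⌈t⌉₊ : ℤ) := by
    exact_mod_cast (abs_le_of_mem_lqBall hq ht hx i).trans (Nat.le_ceil t)
  exact Finset.mem_Icc.mpr ⟨fun i => (abs_le.mp (habs i)).1, fun i => (abs_le.mp (habs i)).2⟩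

theorem Icc_subset_latticeBall (hq : 0 < q) {k : ℕ} (hk : (d : ℝ) ^ (1 / q) * k ≤ t) :
    Finset.Icc (fun _ : Fin d => -(k : ℤ)) (fun _ => (k : ℤ)) ⊆ latticeBall q d t := by
  intro x hx
  obtain ⟨hlower, hupper⟩ := Finset.mem_Icc.mp hx
  have hradius : 0 ≤ (d : ℝ) ^ (1 / q) * k := by positivity
  have hnorm : ‖fun i => (x i : ℝ)‖ ≤ k := by
    refine (pi_norm_le_iff_of_nonneg k.cast_nonneg).mpr fun i => abs_le.mpr ⟨?_, ?_⟩
    · exact_mod_cast hlower i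
    · exact_mod_cast hupper i
  have hmem := mem_lqBall_of_norm_le hq hnorm
  rw [Fintype.card_fin] at hmem
  exact (mem_latticeBall_iff hq (hradius.trans hk)).mpr
    (lqBall_subset_lqBall hq.le hradius hk hmem)

theorem pow_le_card_latticeBall (hq : 0 < q) (ht : 0 ≤ t) :
    (2 * ⌊t / (d : ℝ) ^ (1 / q)⌋₊ + 1) ^ d ≤ (latticeBall q d t).card := by
  have hfloor : (d : ℝ) ^ (1 / q) * ⌊t / (d : ℝ) ^ (1 / q)⌋₊ ≤ t := by
    rw [mul_comm]
    exact mul_le_of_le_div₀ ht (by positivity) (Nat.floor_le (by positivity))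
  simpa only [card_Icc_neg_natCast_pi, Fintype.card_fin] using
    Finset.card_le_card (Icc_subset_latticeBall hq hfloor)

theorem card_latticeBall_le_volume_lqBall (hq : 1 ≤ q) (ht : 0 ≤ t) :
    ((latticeBall q d t).card : ℝ≥0∞) ≤
      MeasureTheory.volume (lqBall (Fin d) q (t + (d : ℝ) ^ (1 / q) / 2)) := by
  refine card_le_volume_of_ball_subset fun x hx => ?_
  have hmem := (mem_latticeBall_iff (by linarith) ht).mp hx
  simpa only [Fintype.card_fin, mul_one_div] using
    ball_subset_lqBall_add (r := 1 / 2) hq ht hmem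

end LatticeBall

theorem stmt3 (q : ℝ) (hq : 1 ≤ q) (d : ℕ) (hd : 0 < d) (N : ℝ) (hN : 0 < N) :
    ((2 * ⌊N / (d : ℝ) ^ (1 / q)⌋₊ + 1) ^ d : ℝ≥0∞) ≤ ((latticeBall q d N).card : ℝ≥0∞) ∧
    ((latticeBall q d N).card : ℝ≥0∞) ≤
      MeasureTheory.volume
        {x : Fin d → ℝ | ∑ i, |x i| ^ q ≤ (N + (d : ℝ) ^ (1 / q) / 2) ^ q} := by
  constructor
  · exact_mod_cast pow_le_card_latticeBall (d := d) (by linarith : 0 < q) hN.le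
  · exact card_latticeBall_le_volume_lqBall hq hN.le
end

section
/- For all q ≥ 1 and d, N ∈ ℕ, if κ_q(d,N) ≤ 409^{−1/q} and k is a real number with N^q ≥ k ≥ 409·κ_q(d,N)^q·N^q, then the number of points x ∈ B_N^q ∩ ℤ^d such that |{i ∈ [d] : x_i = ±1}| ≤ N^q − k is at most 2^{2−k}·|B_N^q ∩ ℤ^d|. -/
/-!
Let `M = ⌊t ^ q⌋`. As `q ≥ 1`, every lattice point of the `ℓ^q` ball of radius `t` has `ℓ¹` norm at
most `M`, while the ball contains all `C(d, M) 2 ^ M` vectors with exactly `M` entries `±1` and all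
other entries `0`. Comparing with this lower bound, the points with exactly `M - s` entries `±1` are
counted by Rankin's trick: weight `x` by `z ^ ‖x‖₁`, so that a coordinate equal to `±1` contributes
`2 z` and any other coordinate at most `1 + 2 z ^ 2 / (1 - z)`. For `z = 4 M / d` the factor
`C(d, M - s) / C(d, M) ≤ (M / (d - M)) ^ s` turns this into at most `4 ^ (-s) C(d, M) 2 ^ M` points,
and it remains to sum a geometric series over `s > k - 1`.
-/

open Finset

theorem choose_mul_sub_pow_le_choose_add_mul_pow (d a s : ℕ) :
    d.choose a * (d - (a + s)) ^ s ≤ d.choose (a + s) * (a + s) ^ s := by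
  calc d.choose a * (d - (a + s)) ^ s
      ≤ d.choose a * (d - a).descFactorial s := by
        gcongr
        exact (Nat.pow_le_pow_left (by omega) s).trans (Nat.pow_sub_le_descFactorial (d - a) s)
    _ = s.factorial * (d.choose a * (d - a).choose (a + s - a)) := by
        rw [Nat.descFactorial_eq_factorial_mul_choose, Nat.add_sub_cancel_left]
        ring
    _ = s.factorial * (d.choose (a + s) * (a + s).choose a) := by
        rw [Nat.choose_mul (Nat.le_add_right a s)]
    _ = d.choose (a + s) * (a + s).descFactorial s := by
        rw [Nat.descFactorial_eq_factorial_mul_choose, Nat.choose_symm_add]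
        ring
    _ ≤ d.choose (a + s) * (a + s) ^ s := by
        gcongr
        exact Nat.descFactorial_le_pow _ _

section GeometricWeight

variable {z : ℝ}

theorem hasSum_int_pow_natAbs (hz₀ : 0 ≤ z) (hz₁ : z < 1) :
    HasSum (fun j : ℤ => z ^ j.natAbs) ((1 + z) / (1 - z)) := by
  have hgeom := hasSum_geometric_of_lt_one hz₀ hz₁
  have hneg : HasSum (fun n : ℕ => z ^ (-((n : ℤ) + 1)).natAbs) (z * (1 - z)⁻¹) := by
    refine (hgeom.mul_left z).congr_fun fun n => ?_
    rw [← pow_succ', show (-((n : ℤ) + 1)).natAbs = n + 1 by omega]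
  convert HasSum.of_nat_of_neg_add_one (f := fun j : ℤ => z ^ j.natAbs)
    (by simpa using hgeom) hneg using 1
  ring

theorem sum_pow_natAbs_le_of_units_notMem (hz₀ : 0 ≤ z) (hz₁ : z < 1) {T : Finset ℤ}
    (h_one : 1 ∉ T) (h_neg_one : -1 ∉ T) :
    ∑ j ∈ T, z ^ j.natAbs ≤ 1 + 2 * z ^ 2 / (1 - z) := by
  have hsum := hasSum_int_pow_natAbs hz₀ hz₁
  have hle : ∑ j ∈ insert 1 (insert (-1) T), z ^ j.natAbs ≤ (1 + z) / (1 - z) :=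
    sum_le_hasSum _ (fun j _ => by positivity) hsum
  rw [sum_insert (by simpa using h_one), sum_insert h_neg_one] at hle
  have hsub : (1 + z) / (1 - z) = 1 + 2 * z ^ 2 / (1 - z) + 2 * z := by
    have : 1 - z ≠ 0 := by linarith
    field_simp
    ring
  simp only [Int.natAbs_one, Int.natAbs_neg, pow_one] at hle
  linarith

theorem sum_pow_natAbs_le_of_subset_units (hz₀ : 0 ≤ z) {T : Finset ℤ} (hT : T ⊆ {1, -1}) :
    ∑ j ∈ T, z ^ j.natAbs ≤ 2 * z := by
  calc ∑ j ∈ T, z ^ j.natAbs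
      ≤ ∑ j ∈ ({1, -1} : Finset ℤ), z ^ j.natAbs :=
        sum_le_sum_of_subset_of_nonneg hT fun j _ _ => by positivity
    _ = 2 * z := by
        rw [sum_pair (by decide)]
        simp [two_mul]

theorem one_add_pow_le_six_fifths_pow {m d : ℝ} {n s : ℕ} (hd : 0 < d) (hzd : z * d = 4 * m)
    (hm : 409 * m ≤ d) (hs : 409 * m ^ 2 ≤ 2 * s * d) (hn : n ≤ d) :
    (1 + 2 * z ^ 2 / (1 - z)) ^ n ≤ (6 / 5) ^ s := by
  have hz : z ≤ 4 / 409 := by nlinarith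
  have h1z : 0 < 1 - z := by linarith
  have hzn : 409 * (n * z ^ 2) ≤ 32 * s := by
    refine le_of_mul_le_mul_right ?_ hd
    calc 409 * (n * z ^ 2) * d ≤ 409 * (d * z ^ 2) * d := by gcongr
      _ = 409 * (z * d) ^ 2 := by ring
      _ ≤ 32 * s * d := by
          rw [hzd]
          linarith
  have hexponent : n * (2 * z ^ 2 / (1 - z)) ≤ s * (1 / 6) := by
    rw [mul_div_assoc', div_le_iff₀ h1z]
    nlinarith [(Nat.cast_nonneg s : (0 : ℝ) ≤ s)]
  have hexp : Real.exp (1 / 6) ≤ 6 / 5 :=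
    (Real.exp_bound_div_one_sub_of_interval (by norm_num) (by norm_num)).trans_eq (by norm_num)
  calc (1 + 2 * z ^ 2 / (1 - z)) ^ n
      ≤ Real.exp (2 * z ^ 2 / (1 - z)) ^ n := by
        gcongr
        rw [add_comm]
        exact Real.add_one_le_exp _
    _ = Real.exp (n * (2 * z ^ 2 / (1 - z))) := (Real.exp_nat_mul _ _).symm
    _ ≤ Real.exp (s * (1 / 6)) := Real.exp_le_exp.2 hexponent
    _ = Real.exp (1 / 6) ^ s := Real.exp_nat_mul _ _
    _ ≤ (6 / 5) ^ s := by gcongr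

end GeometricWeight

theorem two_mul_quarter_pow_le_two_rpow {k : ℝ} {j : ℕ} (hk : k ≤ 2 * j) :
    2 * (1 / 4 : ℝ) ^ j ≤ 2 ^ (1 - k) := by
  calc 2 * (1 / 4 : ℝ) ^ j = 2 ^ (1 - 2 * j : ℝ) := by
        rw [Real.rpow_sub two_pos, Real.rpow_one, Real.rpow_mul two_pos.le, Real.rpow_natCast,
          one_div, inv_pow, div_eq_mul_inv]
        norm_num
    _ ≤ 2 ^ (1 - k) := Real.rpow_le_rpow_of_exponent_le one_le_two (by linarith)

section UnitCoords

variable {ι : Type*} [Fintype ι]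

/-- The set of coordinates at which an integer vector equals `1` or `-1`. -/
def unitCoords (x : ι → ℤ) : Finset ι := {i | x i = 1 ∨ x i = -1}

theorem mem_unitCoords {x : ι → ℤ} {i : ι} : i ∈ unitCoords x ↔ x i = 1 ∨ x i = -1 := by
  simp [unitCoords]

variable {S : Finset (ι → ℤ)} {M : ℕ} {z : ℝ}

theorem card_mul_pow_le_prod_sum_pow_natAbs (hz₀ : 0 ≤ z) (hz₁ : z ≤ 1)
    (hS : ∀ x ∈ S, ∑ i, (x i).natAbs ≤ M) :
    #S * z ^ M ≤ ∏ i, ∑ j ∈ S.image (· i), z ^ j.natAbs := by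
  classical
  have hsub : S ⊆ Fintype.piFinset fun i => S.image (· i) := fun x hx =>
    Fintype.mem_piFinset.2 fun i => mem_image_of_mem (· i) hx
  calc #S * z ^ M = ∑ _x ∈ S, z ^ M := by simp
    _ ≤ ∑ x ∈ S, ∏ i, z ^ (x i).natAbs := by
        refine sum_le_sum fun x hx => ?_
        rw [prod_pow_eq_pow_sum]
        exact pow_le_pow_of_le_one hz₀ hz₁ (hS x hx)
    _ ≤ ∑ x ∈ Fintype.piFinset fun i => S.image (· i), ∏ i, z ^ (x i).natAbs :=
        sum_le_sum_of_subset_of_nonneg hsub fun x _ _ => by positivity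
    _ = ∏ i, ∑ j ∈ S.image (· i), z ^ j.natAbs :=
        (prod_univ_sum _ fun _ (j : ℤ) => z ^ j.natAbs).symm

theorem card_mul_pow_le_of_unitCoords_eq (hz₀ : 0 ≤ z) (hz₁ : z < 1) {A : Finset ι}
    (hA : ∀ x ∈ S, unitCoords x = A) (hS : ∀ x ∈ S, ∑ i, (x i).natAbs ≤ M) :
    #S * z ^ M ≤ (2 * z) ^ #A * (1 + 2 * z ^ 2 / (1 - z)) ^ (Fintype.card ι - #A) := by
  classical
  have hunit : ∀ i ∈ A, S.image (· i) ⊆ {1, -1} := by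
    intro i hi
    refine image_subset_iff.2 fun x hx => ?_
    rw [← hA x hx, mem_unitCoords] at hi
    simpa using hi
  have hnonunit : ∀ i ∈ Aᶜ, 1 ∉ S.image (· i) ∧ -1 ∉ S.image (· i) := by
    intro i hi
    simp only [mem_image, not_exists, not_and]
    constructor <;> intro x hx hxi <;>
      exact mem_compl.1 hi (hA x hx ▸ mem_unitCoords.2 (by simp [hxi]))
  refine (card_mul_pow_le_prod_sum_pow_natAbs hz₀ hz₁.le hS).trans ?_
  rw [← prod_mul_prod_compl A, ← card_compl, ← prod_const, ← prod_const]
  gcongr with i hi i hi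
  · exact sum_pow_natAbs_le_of_subset_units hz₀ (hunit i hi)
  · exact sum_pow_natAbs_le_of_units_notMem hz₀ hz₁ (hnonunit i hi).1 (hnonunit i hi).2

theorem card_mul_pow_le_of_card_unitCoords_eq (hz₀ : 0 ≤ z) (hz₁ : z < 1) {a : ℕ}
    (ha : ∀ x ∈ S, #(unitCoords x) = a) (hS : ∀ x ∈ S, ∑ i, (x i).natAbs ≤ M) :
    #S * z ^ M ≤ (Fintype.card ι).choose a *
      ((2 * z) ^ a * (1 + 2 * z ^ 2 / (1 - z)) ^ (Fintype.card ι - a)) := by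
  classical
  have hmaps : (S : Set (ι → ℤ)).MapsTo unitCoords (powersetCard a (univ : Finset ι)) :=
    fun x hx => by simp [ha x hx]
  have hfiber : ∀ A ∈ powersetCard a (univ : Finset ι), (#{x ∈ S | unitCoords x = A} : ℝ) * z ^ M ≤
      (2 * z) ^ a * (1 + 2 * z ^ 2 / (1 - z)) ^ (Fintype.card ι - a) := by
    intro A hA
    rw [← (mem_powersetCard.1 hA).2]
    exact card_mul_pow_le_of_unitCoords_eq hz₀ hz₁ (fun x hx => (mem_filter.1 hx).2)
      fun x hx => hS x (mem_filter.1 hx).1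
  rw [card_eq_sum_card_fiberwise hmaps, Nat.cast_sum, sum_mul]
  simpa using sum_le_card_nsmul _ _ _ hfiber

theorem card_le_of_card_unitCoords_add_eq {a s : ℕ} (hM₀ : 0 < M) (haM : a + s = M)
    (hM : 409 * M ≤ Fintype.card ι) (hs : 409 * M ^ 2 ≤ 2 * s * Fintype.card ι)
    (ha : ∀ x ∈ S, #(unitCoords x) = a) (hS : ∀ x ∈ S, ∑ i, (x i).natAbs ≤ M) :
    (#S : ℝ) ≤ (1 / 4) ^ s * ((Fintype.card ι).choose M * 2 ^ M) := by
  obtain ⟨d, hdι⟩ : ∃ d : ℝ, d = Fintype.card ι := ⟨_, rfl⟩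
  replace hM₀ : (0 : ℝ) < M := by exact_mod_cast hM₀
  have hMd : 409 * (M : ℝ) ≤ d := by rw [hdι]; exact_mod_cast hM
  have hsd : 409 * (M : ℝ) ^ 2 ≤ 2 * s * d := by rw [hdι]; exact_mod_cast hs
  have hd : 0 < d := by linarith
  have hdM : 0 < d - M := by linarith
  obtain ⟨z, hzd⟩ : ∃ z : ℝ, z * d = 4 * M := ⟨4 * M / d, by field_simp⟩
  have hz₀ : 0 < z := pos_of_mul_pos_left (by rw [hzd]; positivity) hd.le
  have hrankin : #S * z ^ M ≤ (Fintype.card ι).choose a * ((2 * z) ^ a * (6 / 5) ^ s) := by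
    refine (card_mul_pow_le_of_card_unitCoords_eq hz₀.le (by nlinarith) ha hS).trans ?_
    gcongr
    refine one_add_pow_le_six_fifths_pow hd hzd hMd hsd ?_
    rw [hdι]
    exact_mod_cast Nat.sub_le _ a
  have hchoose : (Fintype.card ι).choose a * (d - M) ^ s ≤ (Fintype.card ι).choose M * M ^ s := by
    rw [hdι, ← Nat.cast_sub (by omega), ← haM]
    exact_mod_cast choose_mul_sub_pow_le_choose_add_mul_pow (Fintype.card ι) a s
  refine le_of_mul_le_mul_right ?_ (by positivity : 0 < z ^ M * (d - M) ^ s)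
  calc #S * (z ^ M * (d - M) ^ s) = #S * z ^ M * (d - M) ^ s := by ring
    _ ≤ (Fintype.card ι).choose a * ((2 * z) ^ a * (6 / 5) ^ s) * (d - M) ^ s := by gcongr
    _ = (Fintype.card ι).choose a * (d - M) ^ s * ((2 * z) ^ a * (6 / 5) ^ s) := by ring
    _ ≤ (Fintype.card ι).choose M * M ^ s * ((2 * z) ^ a * (6 / 5) ^ s) := by gcongr
    _ = (Fintype.card ι).choose M * (2 * z) ^ a * (6 / 5 * M) ^ s := by ring
    _ ≤ (Fintype.card ι).choose M * (2 * z) ^ a * (1 / 4 * 2 * (z * (d - M))) ^ s := by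
        have hbase : 6 / 5 * M ≤ 1 / 4 * 2 * (z * (d - M)) := by nlinarith
        gcongr
    _ = (1 / 4) ^ s * ((Fintype.card ι).choose M * 2 ^ M) * (z ^ M * (d - M) ^ s) := by
        simp only [← haM, mul_pow, pow_add]
        ring

theorem card_le_of_card_unitCoords_add_le {j : ℕ} (hj₀ : 0 < j)
    (hM : 409 * M ≤ Fintype.card ι) (hj : 409 * M ^ 2 ≤ 2 * j * Fintype.card ι)
    (hunits : ∀ x ∈ S, #(unitCoords x) + j ≤ M) (hS : ∀ x ∈ S, ∑ i, (x i).natAbs ≤ M) :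
    (#S : ℝ) ≤ 2 * (1 / 4) ^ j * ((Fintype.card ι).choose M * 2 ^ M) := by
  set C : ℝ := (Fintype.card ι).choose M * 2 ^ M
  have hmaps : (S : Set (ι → ℤ)).MapsTo (fun x => M - #(unitCoords x) - j) (range (M + 1 - j)) :=
    fun x hx => by
      have := hunits x hx
      simp only [coe_range, Set.mem_Iio]
      omega
  have hlevel : ∀ i ∈ range (M + 1 - j), (#{x ∈ S | M - #(unitCoords x) - j = i} : ℝ) ≤
      (1 / 2) ^ i * ((1 / 4) ^ j * C) := by
    intro i hi
    have hi := mem_range.1 hi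
    calc (#{x ∈ S | M - #(unitCoords x) - j = i} : ℝ) ≤ (1 / 4) ^ (j + i) * C := by
          refine card_le_of_card_unitCoords_add_eq (a := M - (j + i)) (by omega) (by omega) hM
            (hj.trans (by gcongr; omega)) (fun x hx => ?_) fun x hx => hS x (mem_filter.1 hx).1
          obtain ⟨hxS, hxi⟩ := mem_filter.1 hx
          have := hunits x hxS
          omega
      _ = (1 / 4) ^ i * ((1 / 4) ^ j * C) := by ring
      _ ≤ (1 / 2) ^ i * ((1 / 4) ^ j * C) := by gcongr; norm_num
  rw [card_eq_sum_card_fiberwise hmaps, Nat.cast_sum]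
  calc ∑ i ∈ range (M + 1 - j), (#{x ∈ S | M - #(unitCoords x) - j = i} : ℝ)
      ≤ ∑ i ∈ range (M + 1 - j), (1 / 2) ^ i * ((1 / 4) ^ j * C) := sum_le_sum hlevel
    _ = (∑ i ∈ range (M + 1 - j), (1 / 2) ^ i) * ((1 / 4) ^ j * C) := (sum_mul ..).symm
    _ ≤ 2 * ((1 / 4) ^ j * C) := by
        gcongr
        exact sum_geometric_two_le _
    _ = 2 * (1 / 4) ^ j * C := by ring

end UnitCoords

section SignVectors

variable {ι : Type*} [Fintype ι] [DecidableEq ι] {A : Finset ι}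

/-- The vectors with entries `±1` on `A` and `0` off `A`. They are used to bound the size of an
`ℓ^q` ball from below. -/
def signVectors (A : Finset ι) : Finset (ι → ℤ) :=
  Fintype.piFinset fun i => if i ∈ A then {1, -1} else {0}

theorem card_signVectors (A : Finset ι) : #(signVectors A) = 2 ^ #A := by
  simp [signVectors, Fintype.card_piFinset, apply_ite card]

theorem unitCoords_eq_of_mem_signVectors {x : ι → ℤ} (hx : x ∈ signVectors A) :
    unitCoords x = A := by
  ext i
  have hxi := Fintype.mem_piFinset.1 hx i
  by_cases hi : i ∈ A <;> simp_all [mem_unitCoords]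

theorem sum_abs_rpow_of_mem_signVectors {q : ℝ} (hq : q ≠ 0) {x : ι → ℤ}
    (hx : x ∈ signVectors A) : ∑ i, |(x i : ℝ)| ^ q = #A := by
  have hterm : ∀ i, |(x i : ℝ)| ^ q = if i ∈ A then 1 else 0 := by
    intro i
    have hxi := Fintype.mem_piFinset.1 hx i
    by_cases hi : i ∈ A
    · simp only [hi, if_true, mem_insert, mem_singleton] at hxi
      rcases hxi with hxi | hxi <;> simp [hi, hxi]
    · simp_all [Real.zero_rpow hq]
  simp [hterm]

theorem choose_mul_two_pow_le_card {B : Finset (ι → ℤ)} {M : ℕ}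
    (hB : ∀ A : Finset ι, #A = M → signVectors A ⊆ B) :
    (Fintype.card ι).choose M * 2 ^ M ≤ #B := by
  have hmaps : ∀ x ∈ ({x ∈ B | #(unitCoords x) = M} : Finset (ι → ℤ)),
      unitCoords x ∈ powersetCard M univ :=
    fun x hx => by simpa using (mem_filter.1 hx).2
  have hfiber : ∀ A ∈ powersetCard M (univ : Finset ι),
      2 ^ M ≤ #{x ∈ {x ∈ B | #(unitCoords x) = M} | unitCoords x = A} := by
    intro A hA
    have hAM := (mem_powersetCard.1 hA).2
    rw [← hAM, ← card_signVectors]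
    refine card_le_card fun x hx => ?_
    simp [unitCoords_eq_of_mem_signVectors hx, hB A hAM hx]
  calc (Fintype.card ι).choose M * 2 ^ M = 2 ^ M * #(powersetCard M (univ : Finset ι)) := by
        rw [card_powersetCard, card_univ, mul_comm]
    _ ≤ #{x ∈ B | #(unitCoords x) = M} := mul_card_image_le_card_of_maps_to hmaps _ hfiber
    _ ≤ #B := card_filter_le _ _

end SignVectors

section LatticeBall

variable {q t : ℝ} {d : ℕ}

theorem mem_latticeBall (hq : 0 < q) (ht : 0 ≤ t) {x : Fin d → ℤ} :
    x ∈ latticeBall q d t ↔ ∑ i, |(x i : ℝ)| ^ q ≤ t ^ q := by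
  refine ⟨fun hx => (mem_filter.1 hx).2, fun hx => mem_filter.2 ⟨?_, hx⟩⟩
  have hcoord : ∀ i, |x i| ≤ (⌈t⌉₊ : ℤ) := by
    intro i
    have hle : |(x i : ℝ)| ^ q ≤ t ^ q :=
      (single_le_sum (f := fun i => |(x i : ℝ)| ^ q) (fun i _ => by positivity) (mem_univ i)).trans
        hx
    have hceil := ((Real.rpow_le_rpow_iff (abs_nonneg _) ht hq).1 hle).trans (Nat.le_ceil t)
    exact_mod_cast hceil
  exact mem_Icc.2 ⟨fun i => (abs_le.1 (hcoord i)).1, fun i => (abs_le.1 (hcoord i)).2⟩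

theorem choose_floor_mul_two_pow_le_card_latticeBall (hq : 0 < q) (ht : 0 ≤ t) (d : ℕ) :
    d.choose ⌊t ^ q⌋₊ * 2 ^ ⌊t ^ q⌋₊ ≤ #(latticeBall q d t) := by
  conv_lhs => rw [← Fintype.card_fin d]
  refine choose_mul_two_pow_le_card fun A hA x hx => (mem_latticeBall hq ht).2 ?_
  rw [sum_abs_rpow_of_mem_signVectors hq.ne' hx, hA]
  exact Nat.floor_le (by positivity)

theorem natAbs_le_abs_rpow (hq : 1 ≤ q) (m : ℤ) : (m.natAbs : ℝ) ≤ |(m : ℝ)| ^ q := by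
  rw [Nat.cast_natAbs, Int.cast_abs]
  rcases eq_or_ne m 0 with rfl | hm
  · simp [Real.zero_rpow (zero_lt_one.trans_le hq).ne']
  · exact Real.self_le_rpow_of_one_le (by exact_mod_cast Int.one_le_abs hm) hq

theorem sum_natAbs_le_floor_of_mem_latticeBall (hq : 1 ≤ q) {x : Fin d → ℤ}
    (hx : x ∈ latticeBall q d t) : ∑ i, (x i).natAbs ≤ ⌊t ^ q⌋₊ := by
  refine Nat.le_floor ?_
  push_cast
  exact (sum_le_sum fun i _ => natAbs_le_abs_rpow hq (x i)).trans (mem_filter.1 hx).2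

theorem card_filter_card_unitCoords_le (hq : 1 ≤ q) (ht : 0 ≤ t) (hd : 409 * t ^ q ≤ d) {k : ℝ}
    (hk : 409 * (t ^ q) ^ 2 ≤ k * d) :
    (#{x ∈ latticeBall q d t | (#(unitCoords x) : ℝ) ≤ t ^ q - k} : ℝ) ≤
      2 ^ (1 - k) * #(latticeBall q d t) := by
  rcases le_or_gt k 1 with hk₁ | hk₁
  · calc (#{x ∈ latticeBall q d t | (#(unitCoords x) : ℝ) ≤ t ^ q - k} : ℝ)
        ≤ #(latticeBall q d t) := by exact_mod_cast card_filter_le _ _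
      _ ≤ 2 ^ (1 - k) * #(latticeBall q d t) :=
        le_mul_of_one_le_left (by positivity) (Real.one_le_rpow one_le_two (by linarith))
  set M := ⌊t ^ q⌋₊
  set j := ⌊k⌋₊
  have hMt : (M : ℝ) ≤ t ^ q := Nat.floor_le (by positivity)
  have hjk : (j : ℝ) ≤ k := Nat.floor_le (by linarith)
  have hkj : k < j + 1 := Nat.lt_floor_add_one k
  have hj : 1 ≤ j := (Nat.one_le_floor_iff k).2 hk₁.le
  have hj' : (1 : ℝ) ≤ j := by exact_mod_cast hj
  have hM : 409 * M ≤ d := by exact_mod_cast (by linarith : 409 * (M : ℝ) ≤ d)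
  have hMj : 409 * M ^ 2 ≤ 2 * j * d := by
    have : 409 * (M : ℝ) ^ 2 ≤ 2 * j * d := by
      calc 409 * (M : ℝ) ^ 2 ≤ 409 * (t ^ q) ^ 2 := by gcongr
        _ ≤ k * d := hk
        _ ≤ 2 * j * d := by gcongr; linarith
    exact_mod_cast this
  have hpow : 2 * (1 / 4 : ℝ) ^ j ≤ 2 ^ (1 - k) := two_mul_quarter_pow_le_two_rpow (by linarith)
  have hball : (d.choose M * 2 ^ M : ℝ) ≤ #(latticeBall q d t) := by
    exact_mod_cast choose_floor_mul_two_pow_le_card_latticeBall (by linarith) ht d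
  refine le_trans ?_ (mul_le_mul hpow hball (by positivity) (by positivity))
  conv_rhs => rw [← Fintype.card_fin d]
  refine card_le_of_card_unitCoords_add_le hj (by simpa using hM) (by simpa using hMj)
    (fun x hx => Nat.le_floor ?_)
    fun x hx => sum_natAbs_le_floor_of_mem_latticeBall hq (mem_filter.1 hx).1
  push_cast
  linarith [(mem_filter.1 hx).2]

theorem div_rpow_one_div_rpow (hq : q ≠ 0) (ht : 0 ≤ t) {r : ℝ} (hr : 0 ≤ r) :
    (t / r ^ (1 / q)) ^ q = t ^ q / r := by
  rw [Real.div_rpow ht (by positivity), one_div, Real.rpow_inv_rpow hr hq]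

end LatticeBall

theorem stmt5_general (q : ℝ) (hq : 1 ≤ q) (d : ℕ) (hd : 0 < d) (t : ℝ) (ht : 0 ≤ t)
    (hκ : t / (d : ℝ) ^ (1 / q) ≤ (409 : ℝ) ^ (-(1 / q))) (k : ℝ)
    (hk : 409 * (t / (d : ℝ) ^ (1 / q)) ^ q * t ^ q ≤ k) :
    (#{x ∈ latticeBall q d t | (#{i | x i = 1 ∨ x i = -1} : ℝ) ≤ t ^ q - k} : ℝ) ≤
      2 ^ (1 - k) * #(latticeBall q d t) := by
  have hq₀ : 0 < q := by linarith
  have hd₀ : (0 : ℝ) < d := by exact_mod_cast hd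
  have hκq : t ^ q / d ≤ 1 / 409 := by
    have h := Real.rpow_le_rpow (by positivity) hκ hq₀.le
    rwa [div_rpow_one_div_rpow hq₀.ne' ht hd₀.le, Real.rpow_neg (by norm_num), ← one_div,
      div_rpow_one_div_rpow hq₀.ne' zero_le_one (by norm_num), Real.one_rpow] at h
  rw [div_rpow_one_div_rpow hq₀.ne' ht hd₀.le] at hk
  refine card_filter_card_unitCoords_le hq ht ?_ ?_
  · rw [div_le_div_iff₀ hd₀ (by norm_num)] at hκq
    linarith
  · rwa [mul_div_assoc', div_mul_eq_mul_div, div_le_iff₀ hd₀, mul_assoc, ← sq] at hk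

open Classical in
theorem stmt5 (q : ℝ) (hq : 1 ≤ q) (d N : ℕ) (hd : 0 < d) (hN : 0 < N)
    (hκ : (N : ℝ) / (d : ℝ) ^ (1 / q) ≤ (409 : ℝ) ^ (-(1 / q)))
    (k : ℝ) (hk₁ : k ≤ (N : ℝ) ^ q)
    (hk₂ : 409 * ((N : ℝ) / (d : ℝ) ^ (1 / q)) ^ q * (N : ℝ) ^ q ≤ k) :
    (((latticeBall q d N).filter (fun x =>
        ((Finset.univ.filter (fun i => x i = 1 ∨ x i = -1)).card : ℝ)
          ≤ (N : ℝ) ^ q - k)).card : ℝ)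
      ≤ 2 ^ (2 - k) * ((latticeBall q d N).card : ℝ) := by
  refine (stmt5_general q hq d hd N (Nat.cast_nonneg N) hκ k hk₂).trans ?_
  gcongr <;> norm_num
end

section
/- There exists an absolute constant C > 0 with the following property. For every q ≥ 1 and all d, N ∈ ℕ satisfying κ_q(d,N) ≤ e^{−12/q}, the number of points x ∈ B_N^q ∩ ℤ^d such that Σ_{i ∈ [d], |x_i| ≥ 2} x_i^4 > κ_q(d,N)^{q/22}·N^q is at most C·N^{−q}·|B_N^q ∩ ℤ^d|. -/
/-!
Put `M = N ^ q`, so that `κ ^ q = M / d`. Replacing a zero coordinate by a one shows that lowering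
the bound `M` on `∑ |x i| ^ q` by one shrinks the number of lattice points at least by the factor
`r = 2 * M / d`. Hence a coordinate of a uniform point of the ball equals `k` with probability at
most `r ^ |k|`. Treating one coordinate after the other in this way bounds the exponential moments
of `S = ∑ i, g (x i)`, for `g ≥ 0`, as if the coordinates were independent: `𝔼 (exp S) ≤ exp V` with
`V = d * ∑ k, (exp (g k) - 1) * r ^ |k|`.

For a threshold `t = K ^ 4` take `g k = min |k| (k ^ 4 / K ^ 3)` on `2 ≤ |k|`. If the sum of fourth
powers exceeds `t`, then `K ≤ S`. Since `V` is of order `M ^ 2 / (d * K ^ 3)`, Markov's inequality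
for `exp S - 1` bounds the probability of this by `(exp V - 1) / (exp K - 1)`, which is of order
`V / K * exp (-K / 2)`, hence of order `M ^ 2 / (d * t ^ 2)`. For `t = κ ^ (q * α) * M` this equals
`κ ^ (q * (1 - 2 * α)) / M`.
-/

open Finset

lemma sum_comp_update {ι α : Type*} [Fintype ι] [DecidableEq ι] (f : α → ℝ) (x : ι → α) (i : ι)
    (a : α) : ∑ j, f (Function.update x i a j) = ∑ j, f (x j) - f (x i) + f a := by
  have hupdate : ∀ j, f (Function.update x i a j) = Function.update (f ∘ x) i (f a) j :=
    congrFun (Function.comp_update f x i a)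
  simp only [hupdate, sum_update_of_mem (mem_univ i), sdiff_singleton_eq_erase, Function.comp_apply,
    ← add_sum_erase univ (fun j => f (x j)) (mem_univ i)]
  ring

lemma injOn_update_of_apply_eq {ι α : Type*} [DecidableEq ι] (i : ι) (a b : α) :
    Set.InjOn (fun x : ι → α => Function.update x i b) {x | x i = a} := by
  intro x hx y hy hxy
  calc x = Function.update (Function.update x i b) i a := by simp [← hx.out]
    _ = Function.update (Function.update y i b) i a := congrArg (Function.update · i a) hxy
    _ = y := by simp [← hy.out]

lemma sum_filter_two_le_abs_pow_natAbs_le {r : ℝ} (hr0 : 0 ≤ r) (hr : r ≤ 1 / 2) (s : Finset ℤ) :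
    ∑ k ∈ s with 2 ≤ |k|, r ^ k.natAbs ≤ 4 * r ^ 2 := by
  set f : ℤ → ℝ := fun k => if 2 ≤ |k| then r ^ k.natAbs else 0 with hf
  have hf0 : ∀ k, 0 ≤ f k := fun k => by simp only [hf]; positivity
  have hf_even : f.Even := fun k => by simp only [hf, abs_neg, Int.natAbs_neg]
  obtain ⟨n, hn⟩ : ∃ n : ℕ, s ⊆ Icc (-n : ℤ) n :=
    ⟨s.sup Int.natAbs, fun k hk => by
      have := le_sup (f := Int.natAbs) hk
      rw [mem_Icc]
      omega⟩
  have htail : ∑ m ∈ range (n + 1), f m = ∑ m ∈ Ico 2 (n + 1), r ^ m := by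
    simp only [hf, Nat.abs_cast, Int.natAbs_natCast, ← sum_filter]
    exact sum_congr (by ext m; simp only [mem_filter, mem_range, mem_Ico]; omega) fun _ _ => rfl
  calc ∑ k ∈ s with 2 ≤ |k|, r ^ k.natAbs = ∑ k ∈ s, f k := sum_filter _ _
    _ ≤ ∑ k ∈ Icc (-n : ℤ) n, f k := sum_le_sum_of_subset_of_nonneg hn fun k _ _ => hf0 k
    _ = 2 * ∑ m ∈ Ico 2 (n + 1), r ^ m := by
        rw [sum_Icc_of_even_eq_range hf_even, htail]
        simp [hf]
    _ ≤ 2 * (r ^ 2 / (1 - r)) := by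
        gcongr
        exact geom_sum_Ico_le_of_lt_one hr0 (by linarith)
    _ ≤ 2 * (r ^ 2 / (1 / 2)) := by
        gcongr
        linarith
    _ = 4 * r ^ 2 := by ring

lemma exp_sub_one_le_mul_exp (x : ℝ) : Real.exp x - 1 ≤ x * Real.exp x := by
  have hinv : Real.exp (-x) * Real.exp x = 1 := by
    rw [← Real.exp_add, neg_add_cancel, Real.exp_zero]
  nlinarith [Real.add_one_le_exp (-x), Real.exp_pos x]

lemma exp_sub_one_le_div_mul {u v : ℝ} (hu : 0 ≤ u) (huv : u ≤ v) (hv : 0 < v) :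
    Real.exp u - 1 ≤ u / v * (Real.exp v - 1) := by
  have hconv := convexOn_exp.2 (Set.mem_univ 0) (Set.mem_univ v)
    (sub_nonneg.2 ((div_le_one hv).2 huv)) (div_nonneg hu hv.le) (sub_add_cancel 1 (u / v))
  simp only [smul_eq_mul, mul_zero, zero_add, div_mul_cancel₀ u hv.ne', Real.exp_zero] at hconv
  linarith

lemma exp_sub_one_le_mul_exp_neg_half {u v : ℝ} (hu : 0 ≤ u) (huv : u ≤ v / 2) (hv : 0 < v) :
    Real.exp u - 1 ≤ 2 * u / v * Real.exp (-(v / 2)) * (Real.exp v - 1) := by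
  calc Real.exp u - 1 ≤ u / (v / 2) * (Real.exp (v / 2) - 1) :=
        exp_sub_one_le_div_mul hu huv (half_pos hv)
    _ ≤ u / (v / 2) * (Real.exp (v / 2) - Real.exp (-(v / 2))) := by
        gcongr
        exact Real.exp_le_one_iff.2 (by linarith)
    _ = 2 * u / v * (Real.exp (-(v / 2) + v) - Real.exp (-(v / 2))) := by
        ring_nf
    _ = 2 * u / v * Real.exp (-(v / 2)) * (Real.exp v - 1) := by
        rw [Real.exp_add]
        ring

lemma exp_neg_half_le {v : ℝ} (hv : 0 < v) : Real.exp (-(v / 2)) ≤ 384 / v ^ 4 := by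
  have hexp : (v / 2) ^ 4 / 24 ≤ Real.exp (v / 2) :=
    Real.pow_div_factorial_le_exp (v / 2) (half_pos hv).le 4
  rw [Real.exp_neg, inv_le_comm₀ (Real.exp_pos _) (by positivity), inv_div]
  linarith

lemma le_sum_min_of_pow_le_sum_pow {ι : Type*} {s : Finset ι} {a : ι → ℝ} (ha : ∀ i ∈ s, 0 ≤ a i)
    {K : ℝ} (hK : 0 < K) {n : ℕ} (h : K ^ (n + 1) ≤ ∑ i ∈ s, a i ^ (n + 1)) :
    K ≤ ∑ i ∈ s, min (a i) (a i ^ (n + 1) / K ^ n) := by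
  by_cases hlarge : ∃ i ∈ s, K ≤ a i
  · obtain ⟨i, hi, hKi⟩ := hlarge
    calc K ≤ min (a i) (a i ^ (n + 1) / K ^ n) := by
          refine le_min hKi ((le_div_iff₀ (by positivity)).2 ?_)
          calc K * K ^ n = K ^ (n + 1) := (pow_succ' K n).symm
            _ ≤ a i ^ (n + 1) := by gcongr
      _ ≤ _ := single_le_sum (f := fun i => min (a i) (a i ^ (n + 1) / K ^ n))
          (fun j hj => le_min (ha j hj) (div_nonneg (pow_nonneg (ha j hj) _) (by positivity))) hi
  · push Not at hlarge
    have hmin : ∀ i ∈ s, min (a i) (a i ^ (n + 1) / K ^ n) = a i ^ (n + 1) / K ^ n := by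
      refine fun i hi => min_eq_right ((div_le_iff₀ (by positivity)).2 ?_)
      rw [pow_succ']
      exact mul_le_mul_of_nonneg_left (pow_le_pow_left₀ (ha i hi) (hlarge i hi).le n) (ha i hi)
    rw [sum_congr rfl hmin, ← sum_div, le_div_iff₀ (by positivity), ← pow_succ']
    exact h

/-- A cost on integers which vanishes at `0`, does not exceed `1` at `1` and dominates `|k|`; the
model case is `fun k => |k| ^ q` with `1 ≤ q`. -/
structure IsNormalizedCost (φ : ℤ → ℝ) : Prop where
  map_zero : φ 0 = 0
  map_one_le : φ 1 ≤ 1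
  abs_le : ∀ k : ℤ, |(k : ℝ)| ≤ φ k

lemma isNormalizedCost_abs_rpow {q : ℝ} (hq : 1 ≤ q) :
    IsNormalizedCost fun k => |(k : ℝ)| ^ q where
  map_zero := by simp [Real.zero_rpow (by linarith : q ≠ 0)]
  map_one_le := by simp
  abs_le k := by
    rcases eq_or_ne k 0 with rfl | hk
    · simp [Real.rpow_nonneg]
    · exact Real.self_le_rpow_of_one_le (mod_cast Int.one_le_abs hk) hq

/-- The integer points of total cost at most `τ`. The box makes the set finite; it is no restriction
when `φ` is a normalized cost, see `IsNormalizedCost.mem_costBall`. -/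
noncomputable def costBall (ι : Type*) [Fintype ι] [DecidableEq ι] (φ : ℤ → ℝ) (τ : ℝ) :
    Finset (ι → ℤ) :=
  {x ∈ Fintype.piFinset fun _ => Icc (-⌊τ⌋) ⌊τ⌋ | ∑ i, φ (x i) ≤ τ}

namespace IsNormalizedCost

variable {ι : Type*} [Fintype ι] [DecidableEq ι] {φ : ℤ → ℝ} {τ r : ℝ}

lemma nonneg (hφ : IsNormalizedCost φ) (k : ℤ) : 0 ≤ φ k :=
  (abs_nonneg _).trans (hφ.abs_le k)

lemma one_le_of_ne_zero (hφ : IsNormalizedCost φ) {k : ℤ} (hk : k ≠ 0) : 1 ≤ φ k :=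
  le_trans (mod_cast Int.one_le_abs hk) (hφ.abs_le k)

lemma mem_costBall (hφ : IsNormalizedCost φ) {x : ι → ℤ} :
    x ∈ costBall ι φ τ ↔ ∑ i, φ (x i) ≤ τ := by
  simp only [costBall, mem_filter, Fintype.mem_piFinset, mem_Icc, ← _root_.abs_le,
    and_iff_right_iff_imp]
  intro hx i
  have hxi : φ (x i) ≤ ∑ j, φ (x j) :=
    single_le_sum (f := fun j => φ (x j)) (fun j _ => hφ.nonneg _) (mem_univ i)
  rw [Int.le_floor, Int.cast_abs]
  exact (hφ.abs_le _).trans (hxi.trans hx)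

lemma card_sub_le_card_zeros (hφ : IsNormalizedCost φ) {x : ι → ℤ} (hx : x ∈ costBall ι φ τ) :
    (Fintype.card ι : ℝ) - τ ≤ #{i | x i = 0} := by
  have hnonzero : (#{i | x i ≠ 0} : ℝ) ≤ τ :=
    calc (#{i | x i ≠ 0} : ℝ) = ∑ i, if x i ≠ 0 then (1 : ℝ) else 0 := (sum_boole _ _).symm
      _ ≤ ∑ i, φ (x i) := sum_le_sum fun i _ => by
          split_ifs with hxi
          · exact hφ.one_le_of_ne_zero hxi
          · exact hφ.nonneg _
      _ ≤ τ := hφ.mem_costBall.1 hx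
  have hsplit : (#{i | x i = 0} : ℝ) + #{i | x i ≠ 0} = Fintype.card ι :=
    mod_cast card_filter_add_card_filter_not (s := univ) fun i => x i = 0
  linarith

lemma card_ones_le (hφ : IsNormalizedCost φ) {x : ι → ℤ} (hx : x ∈ costBall ι φ τ) :
    (#{i | x i = 1} : ℝ) ≤ τ :=
  calc (#{i | x i = 1} : ℝ) = ∑ i, if x i = 1 then (1 : ℝ) else 0 := (sum_boole _ _).symm
    _ ≤ ∑ i, φ (x i) := sum_le_sum fun i _ => by
        split_ifs with hxi
        · exact hφ.one_le_of_ne_zero (by omega)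
        · exact hφ.nonneg _
    _ ≤ τ := hφ.mem_costBall.1 hx

lemma card_filter_eq_zero_le_card_filter_eq_one (hφ : IsNormalizedCost φ) (i : ι) :
    #{x ∈ costBall ι φ τ | x i = 0} ≤ #{x ∈ costBall ι φ (τ + 1) | x i = 1} := by
  refine card_le_card_of_injOn (Function.update · i 1) (fun x hx => ?_)
    ((injOn_update_of_apply_eq i 0 1).mono fun x hx => (mem_filter.1 hx).2)
  obtain ⟨hx, hxi⟩ := mem_filter.1 hx
  rw [hφ.mem_costBall] at hx
  refine mem_filter.2 ⟨hφ.mem_costBall.2 ?_, Function.update_self ..⟩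
  rw [sum_comp_update φ, hxi, hφ.map_zero]
  linarith [hφ.map_one_le]

lemma card_costBall_mul_le (hφ : IsNormalizedCost φ) :
    (#(costBall ι φ τ) : ℝ) * (Fintype.card ι - τ) ≤ (τ + 1) * #(costBall ι φ (τ + 1)) :=
  calc (#(costBall ι φ τ) : ℝ) * (Fintype.card ι - τ)
      ≤ ∑ x ∈ costBall ι φ τ, (#{i | x i = 0} : ℝ) := by
        rw [← nsmul_eq_mul]
        exact card_nsmul_le_sum _ _ _ fun x => hφ.card_sub_le_card_zeros
    _ = ∑ i, (#{x ∈ costBall ι φ τ | x i = 0} : ℝ) :=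
        mod_cast sum_card_bipartiteAbove_eq_sum_card_bipartiteBelow fun (x : ι → ℤ) i => x i = 0
    _ ≤ ∑ i, (#{x ∈ costBall ι φ (τ + 1) | x i = 1} : ℝ) :=
        sum_le_sum fun i _ => mod_cast hφ.card_filter_eq_zero_le_card_filter_eq_one i
    _ = ∑ x ∈ costBall ι φ (τ + 1), (#{i | x i = 1} : ℝ) :=
        (mod_cast sum_card_bipartiteAbove_eq_sum_card_bipartiteBelow
          fun (x : ι → ℤ) i => x i = 1 : Eq (α := ℝ) _ _).symm
    _ ≤ (τ + 1) * #(costBall ι φ (τ + 1)) := by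
        rw [mul_comm, ← nsmul_eq_mul]
        exact sum_le_card_nsmul _ _ _ fun x => hφ.card_ones_le

lemma card_costBall_sub_one_le [Nonempty ι] (hφ : IsNormalizedCost φ) (hr1 : r ≤ 1)
    (hτ : 2 * τ ≤ r * Fintype.card ι) :
    (#(costBall ι φ (τ - 1)) : ℝ) ≤ r * #(costBall ι φ τ) := by
  have hd : (0 : ℝ) < Fintype.card ι := mod_cast Fintype.card_pos
  have hτd : 2 * τ ≤ Fintype.card ι := hτ.trans (mul_le_of_le_one_left hd.le hr1)
  have hstep := hφ.card_costBall_mul_le (ι := ι) (τ := τ - 1)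
  rw [sub_add_cancel] at hstep
  refine le_of_mul_le_mul_right ?_ (half_pos hd)
  calc (#(costBall ι φ (τ - 1)) : ℝ) * (Fintype.card ι / 2)
      ≤ #(costBall ι φ (τ - 1)) * (Fintype.card ι - (τ - 1)) := by
        gcongr
        linarith
    _ ≤ τ * #(costBall ι φ τ) := hstep
    _ ≤ r * Fintype.card ι / 2 * #(costBall ι φ τ) := by
        gcongr
        linarith
    _ = r * #(costBall ι φ τ) * (Fintype.card ι / 2) := by ring

lemma card_costBall_sub_natCast_le [Nonempty ι] (hφ : IsNormalizedCost φ) (hr0 : 0 ≤ r)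
    (hr1 : r ≤ 1) (hτ : 2 * τ ≤ r * Fintype.card ι) (n : ℕ) :
    (#(costBall ι φ (τ - n)) : ℝ) ≤ r ^ n * #(costBall ι φ τ) := by
  induction n with
  | zero => simp
  | succ n ih =>
    calc (#(costBall ι φ (τ - (n + 1 : ℕ))) : ℝ) = #(costBall ι φ (τ - n - 1)) := by
          rw [Nat.cast_succ, sub_sub]
      _ ≤ r * #(costBall ι φ (τ - n)) :=
          hφ.card_costBall_sub_one_le hr1 (by linarith [n.cast_nonneg (α := ℝ)])
      _ ≤ r * (r ^ n * #(costBall ι φ τ)) := by gcongr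
      _ = r ^ (n + 1) * #(costBall ι φ τ) := by ring

lemma sum_filter_apply_eq_le (hφ : IsNormalizedCost φ) (i : ι) (k : ℤ) {F : (ι → ℤ) → ℝ}
    (hF0 : ∀ x, 0 ≤ F x) (hF : ∀ x, F (Function.update x i 0) = F x) :
    ∑ x ∈ costBall ι φ τ with x i = k, F x ≤ ∑ x ∈ costBall ι φ (τ - k.natAbs), F x := by
  have hinj : Set.InjOn (Function.update · i 0)
      ((costBall ι φ τ).filter (fun x => x i = k) : Set (ι → ℤ)) :=
    (injOn_update_of_apply_eq i k 0).mono fun x hx => (mem_filter.1 hx).2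
  calc ∑ x ∈ costBall ι φ τ with x i = k, F x
      = ∑ x ∈ ((costBall ι φ τ).filter fun x => x i = k).image (Function.update · i 0), F x := by
        simp only [sum_image hinj, hF]
    _ ≤ ∑ x ∈ costBall ι φ (τ - k.natAbs), F x := by
        refine sum_le_sum_of_subset_of_nonneg (image_subset_iff.2 fun x hx => ?_) fun x _ _ => hF0 x
        obtain ⟨hx, hxi⟩ := mem_filter.1 hx
        rw [hφ.mem_costBall] at hx ⊢
        rw [sum_comp_update φ, hxi, hφ.map_zero, Nat.cast_natAbs, Int.cast_abs]
        linarith [hφ.abs_le k]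

lemma sum_filter_apply_eq_le_pow_mul [Nonempty ι] (hφ : IsNormalizedCost φ) (hr0 : 0 ≤ r)
    (hr1 : r ≤ 1) (hτ : 2 * τ ≤ r * Fintype.card ι) (i : ι) (k : ℤ) {F : (ι → ℤ) → ℝ}
    (hF0 : ∀ x, 0 ≤ F x) (hF : ∀ x, F (Function.update x i 0) = F x) {A : ℝ} (hA : 0 ≤ A)
    (hFA : ∀ σ ≤ τ, ∑ x ∈ costBall ι φ σ, F x ≤ A * #(costBall ι φ σ)) :
    ∑ x ∈ costBall ι φ τ with x i = k, F x ≤ r ^ k.natAbs * (A * #(costBall ι φ τ)) :=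
  calc ∑ x ∈ costBall ι φ τ with x i = k, F x
      ≤ ∑ x ∈ costBall ι φ (τ - k.natAbs), F x := hφ.sum_filter_apply_eq_le i k hF0 hF
    _ ≤ A * #(costBall ι φ (τ - k.natAbs)) := hFA _ (sub_le_self _ (Nat.cast_nonneg _))
    _ ≤ A * (r ^ k.natAbs * #(costBall ι φ τ)) := by
        gcongr
        exact hφ.card_costBall_sub_natCast_le hr0 hr1 hτ _
    _ = r ^ k.natAbs * (A * #(costBall ι φ τ)) := mul_left_comm _ _ _

lemma sum_one_add_apply_mul_le [Nonempty ι] (hφ : IsNormalizedCost φ) (hr0 : 0 ≤ r) (hr1 : r ≤ 1)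
    (hτ : 2 * τ ≤ r * Fintype.card ι) {h : ℤ → ℝ} (hh : ∀ k, 0 ≤ h k) {W : ℝ}
    (hW : ∀ S : Finset ℤ, ∑ k ∈ S, h k * r ^ k.natAbs ≤ W) (i : ι) {F : (ι → ℤ) → ℝ}
    (hF0 : ∀ x, 0 ≤ F x) (hF : ∀ x, F (Function.update x i 0) = F x) {A : ℝ} (hA : 0 ≤ A)
    (hFA : ∀ σ ≤ τ, ∑ x ∈ costBall ι φ σ, F x ≤ A * #(costBall ι φ σ)) :
    ∑ x ∈ costBall ι φ τ, (1 + h (x i)) * F x ≤ (1 + W) * (A * #(costBall ι φ τ)) := by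
  have hfiber (k : ℤ) : ∑ x ∈ costBall ι φ τ with x i = k, h (x i) * F x ≤
      h k * r ^ k.natAbs * (A * #(costBall ι φ τ)) :=
    calc ∑ x ∈ costBall ι φ τ with x i = k, h (x i) * F x
        = h k * ∑ x ∈ costBall ι φ τ with x i = k, F x := by
          rw [mul_sum]
          exact sum_congr rfl fun x hx => by rw [(mem_filter.1 hx).2]
      _ ≤ h k * (r ^ k.natAbs * (A * #(costBall ι φ τ))) :=
          mul_le_mul_of_nonneg_left
            (hφ.sum_filter_apply_eq_le_pow_mul hr0 hr1 hτ i k hF0 hF hA hFA) (hh k)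
      _ = h k * r ^ k.natAbs * (A * #(costBall ι φ τ)) := (mul_assoc _ _ _).symm
  set S := (costBall ι φ τ).image (· i)
  calc ∑ x ∈ costBall ι φ τ, (1 + h (x i)) * F x
      = ∑ x ∈ costBall ι φ τ, F x + ∑ x ∈ costBall ι φ τ, h (x i) * F x := by
        simp only [one_add_mul, sum_add_distrib]
    _ = ∑ x ∈ costBall ι φ τ, F x +
          ∑ k ∈ S, ∑ x ∈ costBall ι φ τ with x i = k, h (x i) * F x := by
        rw [sum_fiberwise_of_maps_to fun x hx => mem_image_of_mem _ hx]
    _ ≤ A * #(costBall ι φ τ) + ∑ k ∈ S, h k * r ^ k.natAbs * (A * #(costBall ι φ τ)) :=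
        add_le_add (hFA τ le_rfl) (sum_le_sum fun k _ => hfiber k)
    _ ≤ A * #(costBall ι φ τ) + W * (A * #(costBall ι φ τ)) := by
        rw [← sum_mul]
        gcongr
        exact hW S
    _ = (1 + W) * (A * #(costBall ι φ τ)) := (one_add_mul _ _).symm

lemma sum_prod_one_add_le [Nonempty ι] (hφ : IsNormalizedCost φ) (hr0 : 0 ≤ r) (hr1 : r ≤ 1)
    (hτ : 2 * τ ≤ r * Fintype.card ι) {h : ℤ → ℝ} (hh : ∀ k, 0 ≤ h k) {W : ℝ}
    (hW : ∀ S : Finset ℤ, ∑ k ∈ S, h k * r ^ k.natAbs ≤ W) (s : Finset ι) :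
    ∑ x ∈ costBall ι φ τ, ∏ i ∈ s, (1 + h (x i)) ≤ (1 + W) ^ #s * #(costBall ι φ τ) := by
  have hW0 : 0 ≤ W := hW ∅
  induction s using Finset.induction_on generalizing τ with
  | empty => simp
  | insert i s his ih =>
    have hindep (x : ι → ℤ) :
        ∏ j ∈ s, (1 + h (Function.update x i 0 j)) = ∏ j ∈ s, (1 + h (x j)) :=
      prod_congr rfl fun j hj => by rw [Function.update_of_ne (ne_of_mem_of_not_mem hj his)]
    simp only [prod_insert his, card_insert_of_notMem his, pow_succ', mul_assoc]
    exact hφ.sum_one_add_apply_mul_le hr0 hr1 hτ hh hW i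
      (fun x => prod_nonneg fun j _ => add_nonneg zero_le_one (hh _)) hindep (by positivity)
      fun σ hσ => ih (by linarith)

lemma card_filter_le_sum_mul_le [Nonempty ι] (hφ : IsNormalizedCost φ) (hr0 : 0 ≤ r) (hr1 : r ≤ 1)
    (hτ : 2 * τ ≤ r * Fintype.card ι) {g : ℤ → ℝ} (hg : ∀ k, 0 ≤ g k) {W : ℝ}
    (hW : ∀ S : Finset ℤ, ∑ k ∈ S, (Real.exp (g k) - 1) * r ^ k.natAbs ≤ W) (K : ℝ) :
    (#{x ∈ costBall ι φ τ | K ≤ ∑ i, g (x i)} : ℝ) * (Real.exp K - 1) ≤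
      (Real.exp (Fintype.card ι * W) - 1) * #(costBall ι φ τ) := by
  have hW0 : 0 ≤ W := hW ∅
  have hexp : ∑ x ∈ costBall ι φ τ, Real.exp (∑ i, g (x i)) ≤
      Real.exp (Fintype.card ι * W) * #(costBall ι φ τ) :=
    calc ∑ x ∈ costBall ι φ τ, Real.exp (∑ i, g (x i))
        = ∑ x ∈ costBall ι φ τ, ∏ i, (1 + (Real.exp (g (x i)) - 1)) := by
          simp only [Real.exp_sum, add_sub_cancel]
      _ ≤ (1 + W) ^ Fintype.card ι * #(costBall ι φ τ) :=
          hφ.sum_prod_one_add_le hr0 hr1 hτ (fun k => sub_nonneg.2 (Real.one_le_exp (hg k))) hW univ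
      _ ≤ Real.exp W ^ Fintype.card ι * #(costBall ι φ τ) := by
          gcongr
          linarith [Real.add_one_le_exp W]
      _ = Real.exp (Fintype.card ι * W) * #(costBall ι φ τ) := by rw [Real.exp_nat_mul]
  calc (#{x ∈ costBall ι φ τ | K ≤ ∑ i, g (x i)} : ℝ) * (Real.exp K - 1)
      ≤ ∑ x ∈ costBall ι φ τ with K ≤ ∑ i, g (x i), (Real.exp (∑ i, g (x i)) - 1) := by
        rw [← nsmul_eq_mul]
        exact card_nsmul_le_sum _ _ _ fun x hx =>
          sub_le_sub_right (Real.exp_le_exp.2 (mem_filter.1 hx).2) 1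
    _ ≤ ∑ x ∈ costBall ι φ τ, (Real.exp (∑ i, g (x i)) - 1) :=
        sum_le_sum_of_subset_of_nonneg (filter_subset _ _) fun x _ _ =>
          sub_nonneg.2 (Real.one_le_exp (sum_nonneg fun i _ => hg _))
    _ ≤ (Real.exp (Fintype.card ι * W) - 1) * #(costBall ι φ τ) := by
        rw [sum_sub_distrib, sum_const, nsmul_one, sub_one_mul]
        linarith

lemma card_filter_le_sum_le [Nonempty ι] (hφ : IsNormalizedCost φ) (hr0 : 0 ≤ r) (hr1 : r ≤ 1)
    (hτ : 2 * τ ≤ r * Fintype.card ι) {g : ℤ → ℝ} (hg : ∀ k, 0 ≤ g k) {W : ℝ}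
    (hW : ∀ S : Finset ℤ, ∑ k ∈ S, (Real.exp (g k) - 1) * r ^ k.natAbs ≤ W) {K : ℝ} (hK : 0 < K)
    (hWK : Fintype.card ι * W ≤ K / 2) :
    (#{x ∈ costBall ι φ τ | K ≤ ∑ i, g (x i)} : ℝ) ≤
      2 * (Fintype.card ι * W) / K * Real.exp (-(K / 2)) * #(costBall ι φ τ) := by
  have hW0 : 0 ≤ W := hW ∅
  have hexpK : 0 < Real.exp K - 1 := sub_pos.2 (Real.one_lt_exp_iff.2 hK)
  refine le_of_mul_le_mul_right ?_ hexpK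
  calc (#{x ∈ costBall ι φ τ | K ≤ ∑ i, g (x i)} : ℝ) * (Real.exp K - 1)
      ≤ (Real.exp (Fintype.card ι * W) - 1) * #(costBall ι φ τ) :=
        hφ.card_filter_le_sum_mul_le hr0 hr1 hτ hg hW K
    _ ≤ 2 * (Fintype.card ι * W) / K * Real.exp (-(K / 2)) * (Real.exp K - 1) *
          #(costBall ι φ τ) := by
        gcongr
        exact exp_sub_one_le_mul_exp_neg_half (by positivity) hWK hK
    _ = _ := mul_right_comm _ _ _

end IsNormalizedCost

/-- The test function `g` of the exponential moment argument at threshold `K ^ 4`: the normalized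
fourth power `k ^ 4 / K ^ 3`, truncated at `|k|` so that `exp (g k)` is summable against a geometric
sequence, and restricted to `2 ≤ |k|`. -/
noncomputable def truncatedQuartic (K : ℝ) (k : ℤ) : ℝ :=
  if 2 ≤ |k| then min |(k : ℝ)| (|(k : ℝ)| ^ 4 / K ^ 3) else 0

section TruncatedQuartic

variable {K : ℝ}

lemma truncatedQuartic_nonneg (hK : 0 < K) (k : ℤ) : 0 ≤ truncatedQuartic K k := by
  unfold truncatedQuartic
  positivity

lemma le_sum_truncatedQuartic {ι : Type*} [Fintype ι] (hK : 0 < K) {x : ι → ℤ}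
    (hx : K ^ 4 ≤ ∑ i with 2 ≤ |x i|, (x i : ℝ) ^ 4) : K ≤ ∑ i, truncatedQuartic K (x i) := by
  simp only [truncatedQuartic, ← sum_filter]
  refine le_sum_min_of_pow_le_sum_pow (fun i _ => abs_nonneg _) hK ?_
  simpa only [Nat.reduceAdd, Even.pow_abs (by decide : Even 4)] using hx

lemma exp_truncatedQuartic_sub_one_le (hK : 0 < K) (k : ℤ) :
    Real.exp (truncatedQuartic K k) - 1 ≤
      if 2 ≤ |k| then 24 / K ^ 3 * Real.exp 2 ^ k.natAbs else 0 := by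
  unfold truncatedQuartic
  split_ifs
  · set a := |(k : ℝ)|
    have ha : 0 ≤ a := abs_nonneg _
    have hpow : a ^ 4 ≤ 24 * Real.exp a := by
      have := Real.pow_div_factorial_le_exp a ha 4
      rwa [div_le_iff₀' (by positivity)] at this
    calc Real.exp (min a (a ^ 4 / K ^ 3)) - 1
        ≤ min a (a ^ 4 / K ^ 3) * Real.exp (min a (a ^ 4 / K ^ 3)) := exp_sub_one_le_mul_exp _
      _ ≤ a ^ 4 / K ^ 3 * Real.exp a := by
          gcongr
          exacts [min_le_right _ _, min_le_left _ _]
      _ ≤ 24 * Real.exp a / K ^ 3 * Real.exp a := by gcongr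
      _ = 24 / K ^ 3 * (Real.exp a * Real.exp a) := by ring
      _ = 24 / K ^ 3 * Real.exp 2 ^ k.natAbs := by
          rw [← Real.exp_add, ← Real.exp_nat_mul, Nat.cast_natAbs, Int.cast_abs, mul_two]
  · simp

lemma sum_exp_truncatedQuartic_sub_one_mul_pow_le (hK : 0 < K) {r : ℝ} (hr0 : 0 ≤ r)
    (hr : Real.exp 2 * r ≤ 1 / 2) (S : Finset ℤ) :
    ∑ k ∈ S, (Real.exp (truncatedQuartic K k) - 1) * r ^ k.natAbs ≤
      96 * Real.exp 4 * r ^ 2 / K ^ 3 :=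
  calc ∑ k ∈ S, (Real.exp (truncatedQuartic K k) - 1) * r ^ k.natAbs
      ≤ ∑ k ∈ S, (if 2 ≤ |k| then 24 / K ^ 3 * Real.exp 2 ^ k.natAbs else 0) * r ^ k.natAbs := by
        gcongr
        exact exp_truncatedQuartic_sub_one_le hK _
    _ = 24 / K ^ 3 * ∑ k ∈ S with 2 ≤ |k|, (Real.exp 2 * r) ^ k.natAbs := by
        simp only [ite_mul, zero_mul, ← sum_filter, mul_sum, mul_pow, mul_assoc]
    _ ≤ 24 / K ^ 3 * (4 * (Real.exp 2 * r) ^ 2) := by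
        gcongr
        exact sum_filter_two_le_abs_pow_natAbs_le (by positivity) hr S
    _ = 96 * Real.exp 4 * r ^ 2 / K ^ 3 := by
        rw [mul_pow, ← Real.exp_nat_mul]
        norm_num
        ring

end TruncatedQuartic

lemma IsNormalizedCost.card_filter_lt_sum_pow_four_le {ι : Type*} [Fintype ι] [DecidableEq ι]
    [Nonempty ι] {φ : ℤ → ℝ} (hφ : IsNormalizedCost φ) {M t : ℝ} (hM : 0 ≤ M)
    (hMd : 4 * Real.exp 2 * M ≤ Fintype.card ι) (ht : 0 < t)
    (hMt : 768 * Real.exp 4 * (M ^ 2 / Fintype.card ι) ≤ t) :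
    (#{x ∈ costBall ι φ M | t < ∑ i with 2 ≤ |x i|, (x i : ℝ) ^ 4} : ℝ) ≤
      294912 * Real.exp 4 * (M ^ 2 / Fintype.card ι / t ^ 2) * #(costBall ι φ M) := by
  obtain ⟨K, hK, rfl⟩ : ∃ K : ℝ, 0 < K ∧ K ^ 4 = t :=
    ⟨t ^ (1 / 4 : ℝ), by positivity, by
      rw [← Real.rpow_mul_natCast ht.le, Nat.cast_ofNat, one_div_mul_cancel four_ne_zero,
        Real.rpow_one]⟩
  have hd : (0 : ℝ) < Fintype.card ι := mod_cast Fintype.card_pos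
  set d := (Fintype.card ι : ℝ)
  set r : ℝ := 2 * M / d with hr_def
  have hr0 : 0 ≤ r := by positivity
  have hr : Real.exp 2 * r ≤ 1 / 2 := by
    rw [hr_def, mul_div_assoc', div_le_iff₀ hd]
    linarith
  have hr1 : r ≤ 1 := by nlinarith [Real.one_le_exp zero_le_two]
  set V := d * (96 * Real.exp 4 * r ^ 2 / K ^ 3) with hV_def
  have hV : 2 * V / K = 768 * Real.exp 4 * (M ^ 2 / d) / K ^ 4 := by
    rw [hV_def, hr_def]
    field_simp
    ring
  have hVK : V ≤ K / 2 := by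
    have : 2 * V / K ≤ 1 := hV ▸ (div_le_one (by positivity)).2 hMt
    rw [div_le_one hK] at this
    linarith
  calc (#{x ∈ costBall ι φ M | K ^ 4 < ∑ i with 2 ≤ |x i|, (x i : ℝ) ^ 4} : ℝ)
      ≤ #{x ∈ costBall ι φ M | K ≤ ∑ i, truncatedQuartic K (x i)} := by
        gcongr with x
        exact fun hx => le_sum_truncatedQuartic hK hx.le
    _ ≤ 2 * V / K * Real.exp (-(K / 2)) * #(costBall ι φ M) :=
        hφ.card_filter_le_sum_le hr0 hr1 (div_mul_cancel₀ _ hd.ne').ge (truncatedQuartic_nonneg hK)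
          (sum_exp_truncatedQuartic_sub_one_mul_pow_le hK hr0 hr) hK hVK
    _ ≤ 768 * Real.exp 4 * (M ^ 2 / d) / K ^ 4 * (384 / K ^ 4) * #(costBall ι φ M) := by
        rw [hV]
        gcongr
        exact exp_neg_half_le hK
    _ = 294912 * Real.exp 4 * (M ^ 2 / d / (K ^ 4) ^ 2) * #(costBall ι φ M) := by ring

lemma mul_exp_four_mul_le_rpow {ε α : ℝ} (hε : 0 < ε) (hε' : ε ≤ Real.exp (-12)) (hα : α ≤ 1 / 12) :
    768 * Real.exp 4 * ε ≤ ε ^ α := by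
  have h768 : (768 : ℝ) ≤ Real.exp 7 := by
    calc (768 : ℝ) ≤ 2.7 ^ 7 := by norm_num
      _ ≤ Real.exp 1 ^ 7 := by
          gcongr
          linarith [Real.exp_one_gt_d9]
      _ = Real.exp 7 := by rw [← Real.exp_nat_mul]; norm_num
  have hpow : ε ^ (1 - α) ≤ Real.exp (-11) :=
    calc ε ^ (1 - α) ≤ Real.exp (-12) ^ (1 - α) := by gcongr; linarith
      _ = Real.exp (-12 * (1 - α)) := (Real.exp_mul _ _).symm
      _ ≤ Real.exp (-11) := Real.exp_le_exp.2 (by linarith)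
  calc 768 * Real.exp 4 * ε = 768 * Real.exp 4 * ε ^ (1 - α) * ε ^ α := by
        rw [mul_assoc _ (ε ^ (1 - α)), ← Real.rpow_add hε, sub_add_cancel, Real.rpow_one]
    _ ≤ Real.exp 7 * Real.exp 4 * Real.exp (-11) * ε ^ α := by gcongr
    _ = ε ^ α := by
        rw [← Real.exp_add, ← Real.exp_add]
        norm_num

lemma IsNormalizedCost.card_filter_rpow_mul_lt_sum_pow_four_le {ι : Type*} [Fintype ι]
    [DecidableEq ι] [Nonempty ι] {φ : ℤ → ℝ} (hφ : IsNormalizedCost φ) {ε α M : ℝ} (hε : 0 < ε)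
    (hε12 : ε ≤ Real.exp (-12)) (hα : α ≤ 1 / 12) (hM : M = ε * Fintype.card ι) :
    (#{x ∈ costBall ι φ M | ε ^ α * M < ∑ i with 2 ≤ |x i|, (x i : ℝ) ^ 4} : ℝ) ≤
      294912 * Real.exp 4 * M⁻¹ * #(costBall ι φ M) := by
  have hd : (0 : ℝ) < Fintype.card ι := mod_cast Fintype.card_pos
  have hM0 : 0 < M := hM ▸ mul_pos hε hd
  have hsmall : 4 * Real.exp 2 * ε ≤ 1 :=
    calc 4 * Real.exp 2 * ε ≤ 768 * Real.exp 4 * ε := by gcongr <;> norm_num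
      _ ≤ ε ^ (0 : ℝ) := mul_exp_four_mul_le_rpow hε hε12 (by norm_num)
      _ = 1 := Real.rpow_zero ε
  have hgain : ε ≤ (ε ^ α) ^ 2 := by
    rw [← Real.rpow_mul_natCast hε.le]
    exact Real.self_le_rpow_of_le_one hε.le (hε12.trans (Real.exp_le_one_iff.2 (by norm_num)))
      (by push_cast; linarith)
  have hsq : M ^ 2 / Fintype.card ι = ε * M := by
    rw [hM]
    field_simp
  have hbound := hφ.card_filter_lt_sum_pow_four_le (ι := ι) (t := ε ^ α * M) hM0.le
    (by rw [hM]; nlinarith) (by positivity)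
    (by rw [hsq, ← mul_assoc]; gcongr; exact mul_exp_four_mul_le_rpow hε hε12 hα)
  refine hbound.trans ?_
  gcongr
  calc M ^ 2 / Fintype.card ι / (ε ^ α * M) ^ 2 = ε / (ε ^ α) ^ 2 * M⁻¹ := by
        rw [hsq]
        field_simp
    _ ≤ 1 * M⁻¹ := by
        gcongr
        exact (div_le_one (by positivity)).2 hgain
    _ = M⁻¹ := one_mul _

lemma latticeBall_eq_costBall {q : ℝ} (hq : 1 ≤ q) {d : ℕ} {R : ℝ} (hR : 0 ≤ R) :
    latticeBall q d R = costBall (Fin d) (fun k => |(k : ℝ)| ^ q) (R ^ q) := by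
  ext x
  rw [(isNormalizedCost_abs_rpow hq).mem_costBall]
  simp only [latticeBall, mem_filter, mem_Icc, and_iff_right_iff_imp]
  intro hx
  have hxi (i) : |x i| ≤ (⌈R⌉₊ : ℤ) := by
    have hle : |(x i : ℝ)| ^ q ≤ R ^ q :=
      (single_le_sum (f := fun j => |(x j : ℝ)| ^ q) (fun j _ => by positivity)
        (mem_univ i)).trans hx
    have := ((Real.rpow_le_rpow_iff (abs_nonneg _) hR (by linarith)).1 hle).trans (Nat.le_ceil R)
    exact_mod_cast this
  exact ⟨fun i => (abs_le.1 (hxi i)).1, fun i => (abs_le.1 (hxi i)).2⟩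

lemma div_rpow_inv_rpow {q : ℝ} (hq : q ≠ 0) {a b : ℝ} (ha : 0 ≤ a) (hb : 0 ≤ b) :
    (a / b ^ (1 / q)) ^ q = a ^ q / b := by
  rw [Real.div_rpow ha (by positivity), ← Real.rpow_mul hb, one_div_mul_cancel hq, Real.rpow_one]

theorem stmt8_general :
    ∃ C : ℝ, 0 < C ∧ ∀ (q : ℝ), 1 ≤ q → ∀ (d : ℕ) (R : ℝ), 0 < d → 0 < R →
      R / (d : ℝ) ^ (1 / q) ≤ Real.exp (-12 / q) → ∀ α ≤ (1 / 12 : ℝ),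
      (#{x ∈ latticeBall q d R | (R / (d : ℝ) ^ (1 / q)) ^ (q * α) * R ^ q
          < ∑ i with 2 ≤ |x i|, (x i : ℝ) ^ 4} : ℝ)
        ≤ C * R ^ (-q) * #(latticeBall q d R) := by
  refine ⟨294912 * Real.exp 4, by positivity, fun q hq d R hd hR hκ α hα => ?_⟩
  have : Nonempty (Fin d) := ⟨⟨0, hd⟩⟩
  have hq0 : 0 < q := by linarith
  have hd' : (0 : ℝ) < d := mod_cast hd
  set κ := R / (d : ℝ) ^ (1 / q) with hκ_def
  have hκ0 : 0 < κ := by positivity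
  have hκR : R ^ q = κ ^ q * Fintype.card (Fin d) := by
    rw [Fintype.card_fin, hκ_def, div_rpow_inv_rpow hq0.ne' hR.le hd'.le, div_mul_cancel₀ _ hd'.ne']
  have hκ12 : κ ^ q ≤ Real.exp (-12) :=
    calc κ ^ q ≤ Real.exp (-12 / q) ^ q := by gcongr
      _ = Real.exp (-12) := by rw [← Real.exp_mul, div_mul_cancel₀ _ hq0.ne']
  rw [latticeBall_eq_costBall hq hR.le, Real.rpow_mul hκ0.le, Real.rpow_neg hR.le]
  exact (isNormalizedCost_abs_rpow hq).card_filter_rpow_mul_lt_sum_pow_four_le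
    (by positivity) hκ12 hα hκR

open Classical in
theorem stmt8 :
    ∃ C : ℝ, 0 < C ∧ ∀ (q : ℝ), 1 ≤ q → ∀ d N : ℕ, 0 < d → 0 < N →
      (N : ℝ) / (d : ℝ) ^ (1 / q) ≤ Real.exp (-12 / q) →
      (((latticeBall q d N).filter (fun x =>
          ((N : ℝ) / (d : ℝ) ^ (1 / q)) ^ (q / 22) * (N : ℝ) ^ q
            < ∑ i ∈ Finset.univ.filter (fun i => 2 ≤ |x i|),
                ((x i : ℝ)) ^ (4 : ℕ))).card : ℝ)
        ≤ C * (N : ℝ) ^ (-q) * ((latticeBall q d N).card : ℝ) := by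
  obtain ⟨C, hC, hbound⟩ := stmt8_general
  refine ⟨C, hC, fun q hq d N hd hN hκ => ?_⟩
  simpa only [← div_eq_mul_one_div] using
    hbound q hq d N hd (Nat.cast_pos.2 hN) hκ (1 / 22) (by norm_num)
end

section
/- Let M ∈ ℕ and let (u_j : j ∈ [d]) be a sequence of real numbers with 0 ≤ u_j ≤ M·(1−δ₀)/2 for some δ₀ ∈ (0,1). Suppose I ⊆ [d] satisfies δ₁·d ≤ |I| ≤ d for some δ₁ ∈ (0,1]. Then for every J = (d₀, d] ∩ ℤ with 0 ≤ d₀ ≤ d one has (1/d!)·Σ_{τ ∈ Sym(d)} exp(−Σ_{j ∈ τ(I) ∩ J} u_j) ≤ 3·exp(−(δ₀δ₁/(20M))·Σ_{j ∈ J} u_j). -/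
/-!
The events `j ∈ τ(I)`, for a uniformly random permutation `τ`, are negatively correlated: `τ(I)`
avoids a set `A` with probability at most `(1 - p) ^ |A|`, where `p` is the density of `I`.
Expanding `∏_{j ∈ τ(I) ∩ J} b_j = ∏_{j ∈ J} ((1 - b_j) 1[j ∉ τ(I)] + b_j)` over subsets of `J`
shows that, for `0 ≤ b_j ≤ 1`, its average is at most `∏_{j ∈ J} ((1 - b_j) (1 - p) + b_j)`, the
value it would have if these events were independent. For `b_j = exp (-u_j)` with `0 ≤ u_j ≤ B`,
each factor is at most `exp (-p u_j / (1 + B))`.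
-/

open Finset
open scoped Nat

section Avoiding

variable {α : Type*} [Fintype α] [DecidableEq α]

/-- The permutations `τ` for which the image `τ(I)` avoids `A`. Their proportion among all
permutations is the probability that a uniformly random set of size `#I` is disjoint from `A`. -/
def avoidingPerms (I A : Finset α) : Finset (Equiv.Perm α) :=
  {τ | Disjoint (I.image τ) A}

lemma mem_avoidingPerms {I A : Finset α} {τ : Equiv.Perm α} :
    τ ∈ avoidingPerms I A ↔ Disjoint (I.image τ) A := by
  simp [avoidingPerms]

lemma card_avoidingPerms_image (I A : Finset α) (σ : Equiv.Perm α) :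
    #(avoidingPerms I (A.image σ)) = #(avoidingPerms I A) := by
  refine (card_equiv (Equiv.mulLeft σ) fun τ => ?_).symm
  rw [mem_avoidingPerms, mem_avoidingPerms, Equiv.coe_mulLeft, Equiv.Perm.coe_mul, ← image_image,
    disjoint_image σ.injective]

lemma card_avoidingPerms_insert_eq (I : Finset α) {A : Finset α} {a b : α} (ha : a ∉ A)
    (hb : b ∉ A) : #(avoidingPerms I (insert a A)) = #(avoidingPerms I (insert b A)) := by
  have swap_image : A.image (Equiv.swap b a) = A := by
    refine (image_congr fun i hi => ?_).trans image_id
    exact Equiv.swap_apply_of_ne_of_ne (ne_of_mem_of_not_mem hi hb) (ne_of_mem_of_not_mem hi ha)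
  rw [← card_avoidingPerms_image I (insert b A) (Equiv.swap b a), image_insert, swap_image,
    Equiv.swap_apply_left]

lemma sum_card_avoidingPerms_insert (I A : Finset α) :
    ∑ j ∈ Aᶜ, #(avoidingPerms I (insert j A)) = #(avoidingPerms I A) * (#Iᶜ - #A) := by
  have insert_eq (j : α) : avoidingPerms I (insert j A) =
      (avoidingPerms I A).bipartiteAbove (fun j (τ : Equiv.Perm α) => j ∉ I.image τ) j := by
    ext τ
    simp only [mem_avoidingPerms, mem_bipartiteAbove, disjoint_insert_right, and_comm]
  have card_admissible (τ : Equiv.Perm α) (hτ : τ ∈ avoidingPerms I A) :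
      #(Aᶜ.bipartiteBelow (fun j (τ : Equiv.Perm α) => j ∉ I.image τ) τ) = #Iᶜ - #A := by
    have : Aᶜ.bipartiteBelow (fun j (τ : Equiv.Perm α) => j ∉ I.image τ) τ = (I.image τ ∪ A)ᶜ := by
      ext j
      simp only [mem_bipartiteBelow, mem_compl, mem_union, not_or, and_comm]
    rw [this, card_compl, card_union_of_disjoint (mem_avoidingPerms.mp hτ),
      card_image_of_injective I τ.injective, card_compl, Nat.sub_sub]
  simp_rw [insert_eq, sum_card_bipartiteAbove_eq_sum_card_bipartiteBelow]
  rw [sum_congr rfl card_admissible, sum_const, smul_eq_mul]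

lemma card_compl_mul_card_avoidingPerms_insert (I : Finset α) {A : Finset α} {a : α}
    (ha : a ∉ A) :
    #Aᶜ * #(avoidingPerms I (insert a A)) = #(avoidingPerms I A) * (#Iᶜ - #A) := by
  rw [← sum_card_avoidingPerms_insert, ← smul_eq_mul, ← sum_const]
  exact sum_congr rfl fun j hj => card_avoidingPerms_insert_eq I ha (mem_compl.mp hj)

lemma card_sub_card_le_dens_mul_card_compl (S A : Finset α) :
    ((#S - #A : ℕ) : ℝ) ≤ S.dens * #Aᶜ := by
  rcases le_total #S #A with hSA | hAS
  · rw [Nat.sub_eq_zero_of_le hSA, Nat.cast_zero]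
    positivity
  · have cast_dens_mul_card : (S.dens : ℝ) * Fintype.card α = #S := by
      exact_mod_cast dens_mul_card S
    have cast_dens_le_one : (S.dens : ℝ) ≤ 1 := by exact_mod_cast S.dens_le_one
    rw [card_compl, Nat.cast_sub hAS, Nat.cast_sub A.card_le_univ, mul_sub,
      cast_dens_mul_card]
    gcongr
    exact mul_le_of_le_one_left (Nat.cast_nonneg _) cast_dens_le_one

lemma card_avoidingPerms_insert_le (I : Finset α) {A : Finset α} {a : α} (ha : a ∉ A) :
    (#(avoidingPerms I (insert a A)) : ℝ) ≤ #(avoidingPerms I A) * Iᶜ.dens := by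
  have card_compl_pos : (0 : ℝ) < #Aᶜ := by
    exact_mod_cast card_pos.mpr ⟨a, mem_compl.mpr ha⟩
  refine le_of_mul_le_mul_left ?_ card_compl_pos
  calc (#Aᶜ : ℝ) * #(avoidingPerms I (insert a A))
      = #(avoidingPerms I A) * (#Iᶜ - #A : ℕ) := by
        exact_mod_cast card_compl_mul_card_avoidingPerms_insert I ha
    _ ≤ #(avoidingPerms I A) * (Iᶜ.dens * #Aᶜ) := by
        gcongr
        exact card_sub_card_le_dens_mul_card_compl Iᶜ A
    _ = #Aᶜ * (#(avoidingPerms I A) * Iᶜ.dens) := by ring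

lemma card_avoidingPerms_le (I A : Finset α) :
    (#(avoidingPerms I A) : ℝ) ≤ (Fintype.card α)! * (Iᶜ.dens : ℝ) ^ #A := by
  induction A using Finset.induction_on with
  | empty => simp [avoidingPerms, Fintype.card_perm]
  | insert a A ha ih =>
    calc (#(avoidingPerms I (insert a A)) : ℝ)
        ≤ #(avoidingPerms I A) * Iᶜ.dens := card_avoidingPerms_insert_le I ha
      _ ≤ (Fintype.card α)! * (Iᶜ.dens : ℝ) ^ #A * Iᶜ.dens := by gcongr
      _ = (Fintype.card α)! * (Iᶜ.dens : ℝ) ^ #(insert a A) := by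
        rw [card_insert_of_notMem ha, pow_succ, mul_assoc]

end Avoiding

section NegativeCorrelation

lemma prod_inter_eq_sum_powerset {α R : Type*} [DecidableEq α] [CommRing R] (S J : Finset α)
    (b : α → R) :
    ∏ j ∈ S ∩ J, b j = ∑ A ∈ J.powerset,
      (∏ j ∈ A, (1 - b j)) * (∏ j ∈ J \ A, b j) * if Disjoint S A then 1 else 0 := by
  calc ∏ j ∈ S ∩ J, b j
      = ∏ j ∈ J, ((1 - b j) * (if j ∉ S then 1 else 0) + b j) := by
        rw [inter_comm, ← prod_ite_mem]
        refine prod_congr rfl fun j _ => ?_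
        by_cases hj : j ∈ S <;> simp [hj]
    _ = _ := by
        rw [prod_add]
        refine sum_congr rfl fun A _ => ?_
        simp only [prod_mul_distrib, prod_ite_zero, prod_const_one, disjoint_right,
          mul_right_comm]

variable {α : Type*} [Fintype α] [DecidableEq α]

lemma sum_perm_prod_image_inter_le (I J : Finset α) {b : α → ℝ}
    (hb : ∀ j ∈ J, b j ∈ Set.Icc 0 1) :
    ∑ τ : Equiv.Perm α, ∏ j ∈ I.image τ ∩ J, b j
      ≤ (Fintype.card α)! * ∏ j ∈ J, ((1 - b j) * Iᶜ.dens + b j) := by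
  simp_rw [prod_inter_eq_sum_powerset]
  rw [sum_comm, prod_add, mul_sum]
  refine sum_le_sum fun A hA => ?_
  have weight_nonneg : 0 ≤ (∏ j ∈ A, (1 - b j)) * ∏ j ∈ J \ A, b j :=
    mul_nonneg
      (prod_nonneg fun j hj => sub_nonneg.mpr (hb j (mem_powerset.mp hA hj)).2)
      (prod_nonneg fun j hj => (hb j (mem_sdiff.mp hj).1).1)
  calc ∑ τ : Equiv.Perm α, (∏ j ∈ A, (1 - b j)) * (∏ j ∈ J \ A, b j) *
        (if Disjoint (I.image τ) A then 1 else 0)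
      = (∏ j ∈ A, (1 - b j)) * (∏ j ∈ J \ A, b j) * #(avoidingPerms I A) := by
        rw [← mul_sum, sum_boole, avoidingPerms]
    _ ≤ (∏ j ∈ A, (1 - b j)) * (∏ j ∈ J \ A, b j) *
        ((Fintype.card α)! * (Iᶜ.dens : ℝ) ^ #A) := by
        gcongr
        exact card_avoidingPerms_le I A
    _ = (Fintype.card α)! * ((∏ j ∈ A, (1 - b j) * (Iᶜ.dens : ℝ)) * ∏ j ∈ J \ A, b j) := by
        rw [prod_mul_distrib, prod_const]
        ring

end NegativeCorrelation

lemma div_one_add_le_one_sub_exp_neg {x B : ℝ} (hx : 0 ≤ x) (hxB : x ≤ B) :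
    x / (1 + B) ≤ 1 - Real.exp (-x) := by
  have exp_neg_le : Real.exp (-x) ≤ (1 + x)⁻¹ := by
    rw [Real.exp_neg]
    gcongr
    linarith [Real.add_one_le_exp x]
  calc x / (1 + B) ≤ x / (1 + x) := by gcongr
    _ = 1 - (1 + x)⁻¹ := by field_simp; ring
    _ ≤ 1 - Real.exp (-x) := by gcongr

lemma one_sub_exp_neg_mul_one_sub_add_le {p x B : ℝ} (hp : 0 ≤ p) (hx : 0 ≤ x) (hxB : x ≤ B) :
    (1 - Real.exp (-x)) * (1 - p) + Real.exp (-x) ≤ Real.exp (-(p / (1 + B)) * x) := by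
  calc (1 - Real.exp (-x)) * (1 - p) + Real.exp (-x)
      = 1 - p * (1 - Real.exp (-x)) := by ring
    _ ≤ 1 - p * (x / (1 + B)) := by
        gcongr
        exact div_one_add_le_one_sub_exp_neg hx hxB
    _ = -(p / (1 + B)) * x + 1 := by ring
    _ ≤ Real.exp (-(p / (1 + B)) * x) := Real.add_one_le_exp _

lemma cast_dens_compl {α : Type*} [Fintype α] [DecidableEq α] [Nonempty α] (s : Finset α) :
    (sᶜ.dens : ℝ) = 1 - s.dens := by
  rw [eq_sub_iff_add_eq', ← NNRat.cast_add, ← dens_union_of_disjoint disjoint_compl_right,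
    union_compl, dens_univ, NNRat.cast_one]

theorem stmt9_general {α : Type*} [Fintype α] [DecidableEq α] (I J : Finset α) {u : α → ℝ}
    {B : ℝ} (hu : ∀ j ∈ J, 0 ≤ u j ∧ u j ≤ B) :
    (1 / ((Fintype.card α)! : ℝ)) * ∑ τ : Equiv.Perm α, Real.exp (-∑ j ∈ I.image τ ∩ J, u j)
      ≤ Real.exp (-(I.dens / (1 + B)) * ∑ j ∈ J, u j) := by
  have exp_mem (j : α) (hj : j ∈ J) : Real.exp (-u j) ∈ Set.Icc 0 1 :=
    ⟨Real.exp_nonneg _, Real.exp_le_one_iff.mpr (neg_nonpos.mpr (hu j hj).1)⟩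
  rw [one_div, inv_mul_le_iff₀ (by positivity)]
  simp_rw [mul_sum, ← sum_neg_distrib, Real.exp_sum]
  refine (sum_perm_prod_image_inter_le I J exp_mem).trans
    (mul_le_mul_of_nonneg_left (prod_le_prod (fun j hj => ?_) fun j hj => ?_) (by positivity))
  · have := sub_nonneg.mpr (exp_mem j hj).2
    positivity
  · have : Nonempty α := ⟨j⟩
    rw [cast_dens_compl]
    exact one_sub_exp_neg_mul_one_sub_add_le (by positivity) (hu j hj).1 (hu j hj).2

lemma mul_div_le_dens_div {α : Type*} [Fintype α] [Nonempty α] {I : Finset α} {M δ₀ δ₁ : ℝ}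
    (hM : 1 ≤ M) (hδ₀ : 0 ≤ δ₀) (hδ₀' : δ₀ ≤ 1) (hI : δ₁ * Fintype.card α ≤ #I) :
    δ₀ * δ₁ / (20 * M) ≤ I.dens / (1 + M * (1 - δ₀) / 2) := by
  have le_dens : δ₁ ≤ I.dens := by
    rw [nnratCast_dens]
    exact (le_div_iff₀ (by exact_mod_cast Fintype.card_pos)).mpr hI
  have numerator_le : δ₀ * δ₁ ≤ I.dens := by
    calc δ₀ * δ₁ ≤ δ₀ * I.dens := by gcongr
      _ ≤ I.dens := mul_le_of_le_one_left (by positivity) hδ₀'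
  have denominator_pos : 0 < 1 + M * (1 - δ₀) / 2 := by
    have := sub_nonneg.mpr hδ₀'
    positivity
  have denominator_le : 1 + M * (1 - δ₀) / 2 ≤ 20 * M := by nlinarith
  exact div_le_div₀ (by positivity) numerator_le denominator_pos denominator_le

open Classical in
theorem stmt9 (d : ℕ) (hd : 0 < d) (M : ℕ) (hM : 0 < M)
    (δ₀ : ℝ) (hδ₀ : 0 < δ₀) (hδ₀' : δ₀ < 1)
    (u : Fin d → ℝ) (hu : ∀ j, 0 ≤ u j ∧ u j ≤ M * (1 - δ₀) / 2)
    (δ₁ : ℝ) (hδ₁ : 0 < δ₁) (hδ₁' : δ₁ ≤ 1)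
    (I : Finset (Fin d)) (hI : δ₁ * d ≤ I.card)
    (d₀ : ℕ) (hd₀ : d₀ ≤ d) :
    (1 / (d.factorial : ℝ)) * ∑ τ : Equiv.Perm (Fin d),
        Real.exp (-∑ j ∈ (I.image τ) ∩ (Finset.univ.filter (fun j : Fin d => d₀ ≤ (j : ℕ))), u j)
      ≤ 3 * Real.exp (-(δ₀ * δ₁ / (20 * M)) *
          ∑ j ∈ Finset.univ.filter (fun j : Fin d => d₀ ≤ (j : ℕ)), u j) := by
  have : Nonempty (Fin d) := ⟨⟨0, hd⟩⟩
  have rate_le := mul_div_le_dens_div (I := I) (M := M) (by exact_mod_cast hM) hδ₀.le hδ₀'.le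
    (by rwa [Fintype.card_fin])
  have average_le := stmt9_general I {j : Fin d | d₀ ≤ (j : ℕ)} fun j _ => hu j
  rw [Fintype.card_fin] at average_le
  refine (average_le.trans ?_).trans (le_mul_of_one_le_left (Real.exp_nonneg _) (by norm_num))
  gcongr
  exact sum_nonneg fun j _ => (hu j).1
end
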